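/- Let ω be a renormalizer on ℝ₊ = (0,∞) that is independent of t, and let (Φ,v) be a classical solution of the renormalized harmonic map system on ℝ₊×S² with constants Λ ≥ 1 and a > 0. Define the renormalized energy E(t) = (1/2) ∫_{S²} ( |∇_{g₀}Φ(t,·)|² + e^{4u(t,·)}|∇_{g₀}v(t,·)|² + 2(Δ_{g₀} ln ω)·Φ(t,·) ) dvol_{g₀}. Then for all t ∈ ℝ₊, the function t ↦ (1/2)∫_{S²}( |∂_tΦ|² + e^{4u}|∂_t v|² )(t,·) dvol_{g₀} − E(t) is differentiable and d/dt [ (1/2)∫_{S²}( |∂_tΦ|² + e^{4u}|∂_t v|² )(t,·) dvol_{g₀} − E(t) ] = ∫_{S²} ( |∂_tΦ|² + e^{4u}|∂_t v|² )(t,·) dvol_{g₀}. -/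

import Mathlib

open Real MeasureTheory Set Filter

noncomputable section

/-- `θ`-partial derivative of a function of `(θ, φ)`. -/
def pdθ (f : ℝ → ℝ → ℝ) : ℝ → ℝ → ℝ := fun θ φ => deriv (fun x => f x φ) θ

/-- `φ`-partial derivative of a function of `(θ, φ)`. -/
def pdφ (f : ℝ → ℝ → ℝ) : ℝ → ℝ → ℝ := fun θ φ => deriv (fun x => f θ x) φ

/-- coordinate derivative in direction `i` (`0 = θ`, `1 = φ`). -/
def pder2 (i : Fin 2) : (ℝ → ℝ → ℝ) → (ℝ → ℝ → ℝ) := if i = 0 then pdθ else pdφ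

/-- Christoffel symbols `Γ^m_{i j}` of the round metric on `S²` in `(θ, φ)`. -/
def christoffel (m i j : Fin 2) (θ : ℝ) : ℝ :=
  if m = 0 ∧ i = 1 ∧ j = 1 then -(Real.sin θ * Real.cos θ)
  else if m = 1 ∧ ((i = 0 ∧ j = 1) ∨ (i = 1 ∧ j = 0)) then Real.cos θ / Real.sin θ
  else 0

/-- covariant derivative (in the round metric) of a `k`-tensor on `S²`,
given by its coordinate components. -/
def covDer {k : ℕ} (T : (Fin k → Fin 2) → ℝ → ℝ → ℝ) :
    (Fin (k + 1) → Fin 2) → ℝ → ℝ → ℝ := fun I θ φ =>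
  pder2 (I 0) (T fun j => I j.succ) θ φ
    - ∑ j : Fin k, ∑ m : Fin 2,
        christoffel m (I 0) (I j.succ) θ *
          T (Function.update (fun j' => I j'.succ) j m) θ φ

/-- the `k`-th covariant derivative of a function on `S²`. -/
def covIter (f : ℝ → ℝ → ℝ) : (k : ℕ) → (Fin k → Fin 2) → ℝ → ℝ → ℝ
  | 0 => fun _ => f
  | k + 1 => covDer (covIter f k)

/-- inverse-metric weight used to compute tensor norms. -/
def sphWeight (i : Fin 2) (θ : ℝ) : ℝ := if i = 0 then 1 else (Real.sin θ ^ 2)⁻¹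

/-- `|∇_{g₀}^k f|`, the norm of the `k`-th covariant derivative in the round metric. -/
def covNorm (k : ℕ) (f : ℝ → ℝ → ℝ) (θ φ : ℝ) : ℝ :=
  Real.sqrt (∑ I : Fin k → Fin 2, (∏ j, sphWeight (I j) θ) * (covIter f k I θ φ) ^ 2)

/-- `∇_{g₀}f·∇_{g₀}h` on the round sphere. -/
def gradDotS2 (f g : ℝ → ℝ → ℝ) (θ φ : ℝ) : ℝ :=
  pdθ f θ φ * pdθ g θ φ + (Real.sin θ ^ 2)⁻¹ * pdφ f θ φ * pdφ g θ φ

/-- `|∇_{g₀}f|²` on the round sphere. -/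
def gradNormSqS2 (f : ℝ → ℝ → ℝ) (θ φ : ℝ) : ℝ := gradDotS2 f f θ φ

/-- `Δ_{g₀}f`, the round Laplacian in coordinates. -/
def lapS2 (f : ℝ → ℝ → ℝ) (θ φ : ℝ) : ℝ :=
  pdθ (pdθ f) θ φ + (Real.cos θ / Real.sin θ) * pdθ f θ φ +
    (Real.sin θ ^ 2)⁻¹ * pdφ (pdφ f) θ φ

/-- integral over `S²` with respect to `dvol_{g₀} = sinθ dθ dφ`. -/
def sphInt (f : ℝ → ℝ → ℝ) : ℝ :=
  ∫ θ in Ioo (0 : ℝ) π, (∫ φ in Ioo (0 : ℝ) (2 * π), f θ φ) * Real.sin θ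

/-- round distance between the points with coordinates `(θ, φ)` and `(θ', φ')`. -/
def sDist (θ φ θ' φ' : ℝ) : ℝ :=
  Real.arccos (Real.cos θ * Real.cos θ' + Real.sin θ * Real.sin θ' * Real.cos (φ - φ'))

/-- a function on `S²` (in coordinates), of class `C^k`, with bounded covariant
derivatives up to order `k`. -/
def CkSphere (k : ℕ) (f : ℝ → ℝ → ℝ) : Prop :=
  ContDiffOn ℝ k (fun p : ℝ × ℝ => f p.1 p.2) (Ioo 0 π ×ˢ (univ : Set ℝ)) ∧
  (∀ θ φ : ℝ, f θ (φ + 2 * π) = f θ φ) ∧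
  ∃ C : ℝ, ∀ j ≤ k, ∀ θ ∈ Ioo (0 : ℝ) π, ∀ φ : ℝ, covNorm j f θ φ ≤ C

/-- a smooth function on `S²` (in coordinates), with bounded covariant derivatives
of all orders. -/
def SmoothSphere (f : ℝ → ℝ → ℝ) : Prop :=
  ContDiffOn ℝ (⊤ : ℕ∞) (fun p : ℝ × ℝ => f p.1 p.2) (Ioo 0 π ×ˢ (univ : Set ℝ)) ∧
  (∀ θ φ : ℝ, f θ (φ + 2 * π) = f θ φ) ∧
  ∀ j : ℕ, ∃ C : ℝ, ∀ θ ∈ Ioo (0 : ℝ) π, ∀ φ : ℝ, covNorm j f θ φ ≤ C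
/-- `t`-partial derivative on the cylinder. -/
def cdt (F : ℝ → ℝ → ℝ → ℝ) : ℝ → ℝ → ℝ → ℝ := fun t θ φ => deriv (fun s => F s θ φ) t

/-- `θ`-partial derivative on the cylinder. -/
def cdθ (F : ℝ → ℝ → ℝ → ℝ) : ℝ → ℝ → ℝ → ℝ := fun t => pdθ (F t)

/-- `φ`-partial derivative on the cylinder. -/
def cdφ (F : ℝ → ℝ → ℝ → ℝ) : ℝ → ℝ → ℝ → ℝ := fun t => pdφ (F t)

/-- the operator `L = ∂_t² − ∂_t + Δ_{g₀}` on the cylinder. -/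
def cL (F : ℝ → ℝ → ℝ → ℝ) : ℝ → ℝ → ℝ → ℝ := fun t θ φ =>
  cdt (cdt F) t θ φ - cdt F t θ φ + lapS2 (F t) θ φ

/-- `∇_g F·∇_g G` for the product metric `g = dt² + g₀`. -/
def cgradDot (F G : ℝ → ℝ → ℝ → ℝ) (t θ φ : ℝ) : ℝ :=
  cdt F t θ φ * cdt G t θ φ + gradDotS2 (F t) (G t) θ φ

/-- `|∇_g F|²` for the product metric `g = dt² + g₀`. -/
def cgradNormSq (F : ℝ → ℝ → ℝ → ℝ) (t θ φ : ℝ) : ℝ := cgradDot F F t θ φ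

/-- a renormalizer `ω` on the interval `I`: positive and smooth away from the poles,
with `ln ω − ln sinθ` extending continuously to `I×S²` together with all its
coordinate derivatives of order `≤ 10`, bounded in absolute value by `A₁ ≥ 1`. -/
structure Renormalizer (I : Set ℝ) (A₁ : ℝ) : Type where
  ω : ℝ → ℝ → ℝ → ℝ
  A₁_ge : 1 ≤ A₁
  pos : ∀ t ∈ I, ∀ θ ∈ Ioo (0 : ℝ) π, ∀ φ : ℝ, 0 < ω t θ φ
  periodic : ∀ t θ φ : ℝ, ω t θ (φ + 2 * π) = ω t θ φ
  smooth : ContDiffOn ℝ (⊤ : ℕ∞) (fun p : ℝ × ℝ × ℝ => ω p.1 p.2.1 p.2.2)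
    (I ×ˢ (Ioo (0 : ℝ) π ×ˢ (univ : Set ℝ)))
  deriv_ext : ∀ m l n : ℕ, m + l + n ≤ 10 →
    ∃ G : ℝ → ℝ → ℝ → ℝ,
      ContinuousOn (fun p : ℝ × ℝ × ℝ => G p.1 p.2.1 p.2.2)
        (I ×ˢ (Icc (0 : ℝ) π ×ˢ (univ : Set ℝ))) ∧
      (∀ t ∈ I, ∀ θ ∈ Ioo (0 : ℝ) π, ∀ φ : ℝ,
        G t θ φ = (cdt^[m] (cdθ^[l] (cdφ^[n]
          (fun t θ φ => Real.log (ω t θ φ) - Real.log (Real.sin θ))))) t θ φ) ∧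
      (∀ t ∈ I, ∀ θ ∈ Icc (0 : ℝ) π, ∀ φ : ℝ, |G t θ φ| ≤ A₁)

/-- a classical solution `(Φ, v)` of the renormalized harmonic map system on `I×S²`,
with constants `Λ ≥ 1` and `a > 0`:  `C³` on `I×S²` and smooth in `t` and `φ`,
satisfying `LΦ = 2e^{4u}|∇_g v|² + L ln ω` and `Lv = −4∇_g u·∇_g v` (where
`u = Φ − ln ω`), `|Φ| ≤ Λ`, with locally finite renormalized energy, and with
traces `v = a` at the north pole and `v = −a` at the south pole. -/
structure RHMSolution (I : Set ℝ) (A₁ : ℝ) (R : Renormalizer I A₁) (Λ a : ℝ) :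
    Type where
  Φ : ℝ → ℝ → ℝ → ℝ
  v : ℝ → ℝ → ℝ → ℝ
  Λ_ge : 1 ≤ Λ
  a_pos : 0 < a
  periodicΦ : ∀ t θ φ : ℝ, Φ t θ (φ + 2 * π) = Φ t θ φ
  periodicv : ∀ t θ φ : ℝ, v t θ (φ + 2 * π) = v t θ φ
  regΦ : ContDiffOn ℝ 3 (fun p : ℝ × ℝ × ℝ => Φ p.1 p.2.1 p.2.2)
    (I ×ˢ (Icc (0 : ℝ) π ×ˢ (univ : Set ℝ)))
  regv : ContDiffOn ℝ 3 (fun p : ℝ × ℝ × ℝ => v p.1 p.2.1 p.2.2)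
    (I ×ˢ (Icc (0 : ℝ) π ×ˢ (univ : Set ℝ)))
  smooth_tφ_Φ : ∀ θ ∈ Icc (0 : ℝ) π,
    ContDiffOn ℝ (⊤ : ℕ∞) (fun q : ℝ × ℝ => Φ q.1 θ q.2) (I ×ˢ (univ : Set ℝ))
  smooth_tφ_v : ∀ θ ∈ Icc (0 : ℝ) π,
    ContDiffOn ℝ (⊤ : ℕ∞) (fun q : ℝ × ℝ => v q.1 θ q.2) (I ×ˢ (univ : Set ℝ))
  eqΦ : ∀ t ∈ I, ∀ θ ∈ Ioo (0 : ℝ) π, ∀ φ : ℝ,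
    cL Φ t θ φ =
      2 * Real.exp (4 * (Φ t θ φ - Real.log (R.ω t θ φ))) * cgradNormSq v t θ φ
        + cL (fun t θ φ => Real.log (R.ω t θ φ)) t θ φ
  eqv : ∀ t ∈ I, ∀ θ ∈ Ioo (0 : ℝ) π, ∀ φ : ℝ,
    cL v t θ φ =
      -4 * cgradDot (fun t θ φ => Φ t θ φ - Real.log (R.ω t θ φ)) v t θ φ
  bddΦ : ∀ t ∈ I, ∀ θ ∈ Icc (0 : ℝ) π, ∀ φ : ℝ, |Φ t θ φ| ≤ Λ
  energy_loc : ∀ J : Set ℝ, J ⊆ I → IsCompact J →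
    IntegrableOn (fun p : ℝ × ℝ × ℝ =>
      (cgradNormSq Φ p.1 p.2.1 p.2.2
        + ((R.ω p.1 p.2.1 p.2.2) ^ 4)⁻¹ * cgradNormSq v p.1 p.2.1 p.2.2)
        * Real.sin p.2.1)
      (J ×ˢ (Ioo (0 : ℝ) π ×ˢ Ioo (0 : ℝ) (2 * π))) volume
  traceN : ∀ t ∈ I, ∀ φ : ℝ, v t 0 φ = a
  traceS : ∀ t ∈ I, ∀ φ : ℝ, v t π φ = -a


open scoped Topology

/-! ### Calculus on the closed cylinder -/

/-- the closed coordinate cylinder -/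
def Om : Set (ℝ × ℝ × ℝ) := Ioi (0 : ℝ) ×ˢ (Icc (0 : ℝ) π ×ˢ (univ : Set ℝ))

/-- the open coordinate cylinder -/
def Omo : Set (ℝ × ℝ × ℝ) := Ioi (0 : ℝ) ×ˢ (Ioo (0 : ℝ) π ×ˢ (univ : Set ℝ))

/-- uncurrying -/
def unc (F : ℝ → ℝ → ℝ → ℝ) : ℝ × ℝ × ℝ → ℝ := fun p => F p.1 p.2.1 p.2.2

/-- directional derivative within the closed cylinder -/
def DD (e : ℝ × ℝ × ℝ) (F : ℝ × ℝ × ℝ → ℝ) : ℝ × ℝ × ℝ → ℝ := fun p => fderivWithin ℝ F Om p e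

/-- the `t` direction -/
def et : ℝ × ℝ × ℝ := (1, 0, 0)
/-- the `θ` direction -/
def eth : ℝ × ℝ × ℝ := (0, 1, 0)
/-- the `φ` direction -/
def eph : ℝ × ℝ × ℝ := (0, 0, 1)

lemma mem_Om {t θ φ : ℝ} : (t, θ, φ) ∈ Om ↔ 0 < t ∧ θ ∈ Icc 0 π := by
  simp [Om]

lemma mem_Omo {t θ φ : ℝ} : (t, θ, φ) ∈ Omo ↔ 0 < t ∧ θ ∈ Ioo 0 π := by
  simp [Omo]

lemma Omo_sub : Omo ⊆ Om := by
  rintro ⟨t, θ, φ⟩ h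
  rw [mem_Omo] at h; rw [mem_Om]
  exact ⟨h.1, Ioo_subset_Icc_self h.2⟩

lemma Omo_open : IsOpen Omo := isOpen_Ioi.prod (isOpen_Ioo.prod isOpen_univ)

lemma Om_nhds {p : ℝ × ℝ × ℝ} (hp : p ∈ Omo) : Om ∈ 𝓝 p :=
  mem_of_superset (Omo_open.mem_nhds hp) Omo_sub

lemma Om_uniq : UniqueDiffOn ℝ Om :=
  (uniqueDiffOn_Ioi 0).prod ((uniqueDiffOn_Icc Real.pi_pos).prod uniqueDiffOn_univ)

lemma Om_closure {p : ℝ × ℝ × ℝ} (hp : p ∈ Om) : p ∈ closure (interior Om) := by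
  have h1 : Omo ⊆ interior Om := interior_maximal Omo_sub Omo_open
  apply closure_mono h1
  rw [Omo, closure_prod_eq, closure_prod_eq, closure_Ioo Real.pi_pos.ne]
  obtain ⟨a, b, c⟩ := p
  rw [mem_Om] at hp
  refine ⟨subset_closure hp.1, hp.2, by simp⟩

lemma DD_contDiffOn {n : ℕ} {F : ℝ × ℝ × ℝ → ℝ} (e : ℝ × ℝ × ℝ)
    (h : ContDiffOn ℝ (n + 1 : ℕ) F Om) : ContDiffOn ℝ n (DD e F) Om := by
  have := h.fderivWithin Om_uniq (m := n) (by exact_mod_cast le_refl _)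
  exact this.clm_apply contDiffOn_const

lemma DD_contDiffOn_o {n : ℕ} {F : ℝ × ℝ × ℝ → ℝ} (e : ℝ × ℝ × ℝ)
    (h : ContDiffOn ℝ (n + 1 : ℕ) F Omo) : ContDiffOn ℝ n (DD e F) Omo := by
  have := h.fderivWithin Omo_open.uniqueDiffOn (m := n) (by exact_mod_cast le_refl _)
  refine (this.clm_apply (contDiffOn_const (c := e))).congr ?_
  intro p hp
  simp only [DD]
  rw [fderivWithin_of_mem_nhds (Om_nhds hp), fderivWithin_of_mem_nhds (Omo_open.mem_nhds hp)]

lemma DD_t {F : ℝ × ℝ × ℝ → ℝ} {t θ φ : ℝ} (hp : (t, θ, φ) ∈ Om)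
    (h : DifferentiableWithinAt ℝ F Om (t, θ, φ)) :
    HasDerivAt (fun x => F (x, θ, φ)) (DD et F (t, θ, φ)) t := by
  have h1 := h.hasFDerivWithinAt
  have hc : HasDerivWithinAt (fun x : ℝ => (x, θ, φ)) et (Ioi 0) t :=
    ((hasDerivAt_id t).prodMk ((hasDerivAt_const t θ).prodMk (hasDerivAt_const t φ))).hasDerivWithinAt
  rw [mem_Om] at hp
  have := h1.comp_hasDerivWithinAt t hc (fun x hx => mem_Om.2 ⟨hx, hp.2⟩)
  exact this.hasDerivAt (Ioi_mem_nhds hp.1)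

lemma DD_ph {F : ℝ × ℝ × ℝ → ℝ} {t θ φ : ℝ} (hp : (t, θ, φ) ∈ Om)
    (h : DifferentiableWithinAt ℝ F Om (t, θ, φ)) :
    HasDerivAt (fun x => F (t, θ, x)) (DD eph F (t, θ, φ)) φ := by
  have h1 := h.hasFDerivWithinAt
  have hc : HasDerivWithinAt (fun x : ℝ => (t, θ, x)) eph univ φ :=
    ((hasDerivAt_const φ t).prodMk ((hasDerivAt_const φ θ).prodMk (hasDerivAt_id φ))).hasDerivWithinAt
  rw [mem_Om] at hp
  have := h1.comp_hasDerivWithinAt φ hc (fun x hx => mem_Om.2 hp)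
  exact this.hasDerivAt univ_mem

lemma DD_thw {F : ℝ × ℝ × ℝ → ℝ} {t θ φ : ℝ} (hp : (t, θ, φ) ∈ Om)
    (h : DifferentiableWithinAt ℝ F Om (t, θ, φ)) :
    HasDerivWithinAt (fun x => F (t, x, φ)) (DD eth F (t, θ, φ)) (Icc 0 π) θ := by
  have h1 := h.hasFDerivWithinAt
  have hc : HasDerivWithinAt (fun x : ℝ => (t, x, φ)) eth (Icc 0 π) θ :=
    ((hasDerivAt_const θ t).prodMk ((hasDerivAt_id θ).prodMk (hasDerivAt_const θ φ))).hasDerivWithinAt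
  rw [mem_Om] at hp
  exact h1.comp_hasDerivWithinAt θ hc (fun x hx => mem_Om.2 ⟨hp.1, hx⟩)

lemma DD_th {F : ℝ × ℝ × ℝ → ℝ} {t θ φ : ℝ} (hp : (t, θ, φ) ∈ Omo)
    (h : DifferentiableWithinAt ℝ F Om (t, θ, φ)) :
    HasDerivAt (fun x => F (t, x, φ)) (DD eth F (t, θ, φ)) θ :=
  (DD_thw (Omo_sub hp) h).hasDerivAt (Icc_mem_nhds (mem_Omo.1 hp).2.1 (mem_Omo.1 hp).2.2)

lemma DD_symm {F : ℝ × ℝ × ℝ → ℝ} {p : ℝ × ℝ × ℝ} (hp : p ∈ Om)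
    (h : ContDiffOn ℝ 2 F Om) (e f : ℝ × ℝ × ℝ) :
    DD e (DD f F) p = DD f (DD e F) p := by
  have hs := (h p hp).isSymmSndFDerivWithinAt (by simp) Om_uniq (Om_closure hp) hp
  have hd : DifferentiableWithinAt ℝ (fderivWithin ℝ F Om) Om p :=
    (h.fderivWithin Om_uniq (m := 1) (by norm_num)).differentiableOn (by norm_num) p hp
  have key : ∀ e f : ℝ × ℝ × ℝ, DD e (DD f F) p
      = fderivWithin ℝ (fderivWithin ℝ F Om) Om p e f := by
    intro e f
    have h2 := hd.hasFDerivWithinAt.clm_apply (hasFDerivWithinAt_const f p Om)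
    have h3 := h2.fderivWithin (Om_uniq p hp)
    change (fderivWithin ℝ (fun y => (fderivWithin ℝ F Om y) f) Om p) e = _
    rw [h3]; simp
  rw [key, key]
  exact hs e f

lemma DDo_diff {F : ℝ × ℝ × ℝ → ℝ} {p : ℝ × ℝ × ℝ} (hp : p ∈ Omo) {n : ℕ} (hn : 1 ≤ n)
    (h : ContDiffOn ℝ n F Omo) : DifferentiableWithinAt ℝ F Om p := by
  have := (h.contDiffAt (Omo_open.mem_nhds hp)).differentiableAt
    (by exact_mod_cast (by omega : n ≠ 0))
  exact this.differentiableWithinAt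

lemma DDo_symm {F : ℝ × ℝ × ℝ → ℝ} {p : ℝ × ℝ × ℝ} (hp : p ∈ Omo)
    (h : ContDiffOn ℝ 2 F Omo) (e f : ℝ × ℝ × ℝ) :
    DD e (DD f F) p = DD f (DD e F) p := by
  have h0 := h.contDiffAt (Omo_open.mem_nhds hp)
  have hs := (h0.contDiffWithinAt (s := Om)).isSymmSndFDerivWithinAt (by simp) Om_uniq
    (Om_closure (Omo_sub hp)) (Omo_sub hp)
  have hd : DifferentiableWithinAt ℝ (fderivWithin ℝ F Om) Om p := by
    have := (h0.contDiffWithinAt (s := Om)).fderivWithin_right (m := 1) Om_uniq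
      (by norm_num) (Omo_sub hp)
    exact this.differentiableWithinAt (by norm_num)
  have key : ∀ e f : ℝ × ℝ × ℝ, DD e (DD f F) p
      = fderivWithin ℝ (fderivWithin ℝ F Om) Om p e f := by
    intro e f
    have h2 := hd.hasFDerivWithinAt.clm_apply (hasFDerivWithinAt_const f p Om)
    have h3 := h2.fderivWithin (Om_uniq p (Omo_sub hp))
    change (fderivWithin ℝ (fun y => (fderivWithin ℝ F Om y) f) Om p) e = _
    rw [h3]; simp
  rw [key, key]
  exact hs e f

/-! ### Vanishing at the poles gives decay -/

lemma le_two_sin {x : ℝ} (h0 : 0 ≤ x) (h1 : x ≤ π / 2) : x ≤ 2 * sin x := by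
  have := Real.mul_le_sin h0 h1
  have h4 : x * π ≤ 4 * x := by nlinarith [Real.pi_lt_four]
  have hp := Real.pi_pos
  have : 2 / π * x * π = 2 * x := by field_simp
  nlinarith

lemma decay_half {f f' : ℝ → ℝ} {C : ℝ} {k : ℕ} (hC : 0 ≤ C)
    (hf : ContinuousOn f (Icc 0 π)) (hd : ∀ x ∈ Ioo 0 π, HasDerivAt f (f' x) x)
    (hb : ∀ x ∈ Ioo 0 π, |f' x| ≤ C * sin x ^ k) (h0 : f 0 = 0) :
    ∀ x ∈ Ioc 0 (π / 2), |f x| ≤ 2 * C * sin x ^ (k + 1) := by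
  intro x hx
  have hpi := Real.pi_pos
  obtain ⟨c, hc, hce⟩ := exists_hasDerivAt_eq_slope f f' hx.1
    (hf.mono (Icc_subset_Icc le_rfl (by linarith [hx.2])))
    (fun y hy => hd y ⟨hy.1, by linarith [hy.2, hx.2]⟩)
  have hfx : f x = f' c * x := by
    rw [hce, h0]; field_simp [hx.1.ne']; ring
  have hcp : c ∈ Ioo 0 π := ⟨hc.1, by linarith [hc.2, hx.2]⟩
  have hs : sin c ≤ sin x := Real.sin_le_sin_of_le_of_le_pi_div_two (by linarith [hc.1]) hx.2 hc.2.le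
  have hsc : 0 ≤ sin c := (Real.sin_pos_of_mem_Ioo hcp).le
  have hk : sin c ^ k ≤ sin x ^ k := pow_le_pow_left₀ hsc hs k
  rw [hfx, abs_mul, abs_of_pos hx.1]
  have := hb c hcp
  calc |f' c| * x ≤ (C * sin x ^ k) * (2 * sin x) := by
        apply mul_le_mul _ (le_two_sin hx.1.le hx.2) hx.1.le
        · exact mul_nonneg hC (pow_nonneg (hsc.trans hs) k)
        · exact this.trans (mul_le_mul_of_nonneg_left hk hC)
    _ = _ := by ring

lemma decay {f f' : ℝ → ℝ} {C : ℝ} {k : ℕ} (hC : 0 ≤ C)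
    (hf : ContinuousOn f (Icc 0 π)) (hd : ∀ x ∈ Ioo 0 π, HasDerivAt f (f' x) x)
    (hb : ∀ x ∈ Ioo 0 π, |f' x| ≤ C * sin x ^ k) (h0 : f 0 = 0) (h1 : f π = 0) :
    ∀ x ∈ Ioo 0 π, |f x| ≤ 2 * C * sin x ^ (k + 1) := by
  intro x hx
  rcases le_total x (π / 2) with h | h
  · exact decay_half hC hf hd hb h0 x ⟨hx.1, h⟩
  · have := decay_half (f := fun y => f (π - y)) (f' := fun y => - f' (π - y)) (k := k) hC
      (hf.comp (by fun_prop) (fun y hy => ⟨by linarith [hy.2], by linarith [hy.1]⟩))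
      (fun y hy => by
        have h2 := hd (π - y) ⟨by linarith [hy.2], by linarith [hy.1]⟩
        have h3 := h2.comp y ((hasDerivAt_const y π).sub (hasDerivAt_id y))
        have h4 : (0 - 1 : ℝ) = -1 := by norm_num
        rw [h4, mul_neg_one] at h3
        exact h3)
      (fun y hy => by
        have h2 := hb (π - y) ⟨by linarith [hy.2], by linarith [hy.1]⟩
        simpa using h2) (by simpa using h1) (π - x) ⟨by linarith [hx.2], by linarith⟩
    simpa using this

/-! ### Boundedness on compact pieces -/

lemma bdd_of_cont {F : ℝ × ℝ × ℝ → ℝ} (hF : ContinuousOn F Om) {a b : ℝ} (ha : 0 < a) :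
    ∃ C, 0 ≤ C ∧ ∀ t ∈ Icc a b, ∀ θ ∈ Icc 0 π, ∀ φ ∈ Icc 0 (2 * π), |F (t, θ, φ)| ≤ C := by
  have hK : IsCompact (Icc a b ×ˢ (Icc (0 : ℝ) π ×ˢ Icc (0 : ℝ) (2 * π))) :=
    isCompact_Icc.prod (isCompact_Icc.prod isCompact_Icc)
  obtain ⟨C, hC⟩ := hK.exists_bound_of_continuousOn (hF.mono (by
    rintro ⟨t, θ, φ⟩ h
    exact mem_Om.2 ⟨lt_of_lt_of_le ha h.1.1, h.2.1⟩))
  refine ⟨max C 0, le_max_right _ _, fun t ht θ hθ φ hφ => ?_⟩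
  exact (hC (t, θ, φ) ⟨ht, hθ, hφ⟩).trans (le_max_left _ _)

/-! ### Non-integrability at the poles -/

lemma not_int {H : ℝ × ℝ × ℝ → ℝ} {t₀ θ₀ φ₀ c δ : ℝ} (hθ₀ : θ₀ = 0 ∨ θ₀ = π)
    (hφ₀ : φ₀ ∈ Ico 0 (2 * π)) (hc : 0 < c) (hδ : 0 < δ)
    (hintg : IntegrableOn H (Icc t₀ (t₀ + 1) ×ˢ (Ioo (0 : ℝ) π ×ˢ Ioo (0 : ℝ) (2 * π))) volume)
    (hb : ∀ t θ φ, t ∈ Ioo t₀ (t₀ + δ) → θ ∈ Ioo 0 π → |θ - θ₀| < δ → φ ∈ Ioo φ₀ (φ₀ + δ) →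
      c * (sin θ)⁻¹ ≤ H (t, θ, φ)) : False := by
  have hpi := Real.pi_pos
  set A := Ioo t₀ (t₀ + min δ 1) with hA
  set B := Ioo (0 : ℝ) π ∩ {θ | |θ - θ₀| < δ} with hB
  set D := Ioo φ₀ (min (φ₀ + δ) (2 * π)) with hD
  have hBm : MeasurableSet B := measurableSet_Ioo.inter
    (isOpen_lt (by fun_prop) continuous_const).measurableSet
  have hsub : A ×ˢ (B ×ˢ D) ⊆ Icc t₀ (t₀ + 1) ×ˢ (Ioo (0 : ℝ) π ×ˢ Ioo (0 : ℝ) (2 * π)) := by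
    rintro ⟨t, θ, φ⟩ ⟨h1, h2, h3⟩
    refine ⟨⟨h1.1.le, ?_⟩, h2.1, lt_of_le_of_lt hφ₀.1 h3.1, lt_of_lt_of_le h3.2 (min_le_right _ _)⟩
    have h4 : t < t₀ + min δ 1 := h1.2
    have h5 := min_le_right δ 1
    change t ≤ t₀ + 1
    linarith
  have h1 : IntegrableOn (fun p : ℝ × ℝ × ℝ => |p.2.1 - θ₀|⁻¹) (A ×ˢ (B ×ˢ D)) volume := by
    refine Integrable.mono' ((hintg.mono_set hsub).const_mul c⁻¹) ?_ ?_
    · exact (by fun_prop : Measurable (fun p : ℝ × ℝ × ℝ => |p.2.1 - θ₀|⁻¹)).aestronglyMeasurable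
    · refine (ae_restrict_iff' (measurableSet_Ioo.prod (hBm.prod measurableSet_Ioo))).2
        (Eventually.of_forall ?_)
      rintro ⟨t, θ, φ⟩ ⟨h1, h2, h3⟩
      have hb' := hb t θ φ ⟨h1.1, lt_of_lt_of_le h1.2 (by simp)⟩ h2.1 h2.2
        ⟨h3.1, lt_of_lt_of_le h3.2 (min_le_left _ _)⟩
      have hs : 0 < sin θ := Real.sin_pos_of_mem_Ioo h2.1
      have hsle : sin θ ≤ |θ - θ₀| := by
        rcases hθ₀ with rfl | rfl
        · rw [sub_zero, abs_of_pos h2.1.1]; exact Real.sin_le h2.1.1.le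
        · rw [abs_of_neg (by linarith [h2.1.2]), ← Real.sin_pi_sub]
          have := Real.sin_le (x := π - θ) (by linarith [h2.1.2])
          linarith
      simp only [norm_inv, Real.norm_eq_abs, abs_abs]
      calc |θ - θ₀|⁻¹ ≤ (sin θ)⁻¹ := inv_anti₀ hs hsle
        _ = c⁻¹ * (c * (sin θ)⁻¹) := by field_simp
        _ ≤ _ := by gcongr
  rw [IntegrableOn, Measure.volume_eq_prod, ← Measure.prod_restrict, Measure.volume_eq_prod,
    ← Measure.prod_restrict] at h1
  have h2 := h1.prod_right_ae
  have hAne : (volume.restrict A) ≠ 0 := by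
    rw [Ne, Measure.restrict_eq_zero, hA, Real.volume_Ioo]
    simp [hδ]
  have hDne : (volume.restrict D) ≠ 0 := by
    rw [Ne, Measure.restrict_eq_zero, hD, Real.volume_Ioo]
    simp [hδ, hφ₀.2]
  have : (ae (volume.restrict A)).NeBot := ae_neBot.2 hAne
  have : (ae (volume.restrict D)).NeBot := ae_neBot.2 hDne
  obtain ⟨t, ht⟩ := h2.exists
  obtain ⟨φ, hφ⟩ := ht.prod_left_ae.exists
  have h3 : IntegrableOn (fun θ : ℝ => |θ - θ₀|⁻¹) B volume := hφ
  have h4 : IntegrableOn (fun θ : ℝ => (θ - θ₀)⁻¹) B volume := by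
    refine Integrable.mono' h3 ?_ ?_
    · exact (by fun_prop : Measurable (fun p : ℝ => (p - θ₀)⁻¹)).aestronglyMeasurable
    · simp
  set η := min δ π with hη
  have hη0 : 0 < η := lt_min hδ hpi
  rcases hθ₀ with rfl | rfl
  · have h5 : IntervalIntegrable (fun θ : ℝ => (θ - 0)⁻¹) volume 0 η := by
      rw [intervalIntegrable_iff_integrableOn_Ioo_of_le hη0.le]
      refine h4.mono_set ?_
      intro x hx
      refine ⟨⟨hx.1, lt_of_lt_of_le hx.2 (min_le_right _ _)⟩, ?_⟩
      simp only [mem_ofPred_eq, sub_zero, abs_of_pos hx.1]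
      exact lt_of_lt_of_le hx.2 (min_le_left _ _)
    rw [intervalIntegrable_sub_inv_iff] at h5
    rcases h5 with h5 | h5
    · exact hη0.ne h5
    · exact h5 left_mem_uIcc
  · have h5 : IntervalIntegrable (fun θ : ℝ => (θ - π)⁻¹) volume (π - η) π := by
      rw [intervalIntegrable_iff_integrableOn_Ioo_of_le (by linarith)]
      refine h4.mono_set ?_
      intro x hx
      have h6 := min_le_right δ π
      have h7 := min_le_left δ π
      refine ⟨⟨by linarith [hx.1], hx.2⟩, ?_⟩
      simp only [mem_ofPred_eq, abs_of_neg (sub_neg.2 hx.2)]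
      linarith [hx.1]
    rw [intervalIntegrable_sub_inv_iff] at h5
    rcases h5 with h5 | h5
    · linarith
    · exact h5 right_mem_uIcc

/-! ### Parametric interval integrals -/

lemma par_cont {X : Type*} [TopologicalSpace X] {s : Set X} {q : X → ℝ → ℝ}
    (a b : ℝ) (hab : a ≤ b)
    (hq : ContinuousOn (fun p : X × ℝ => q p.1 p.2) (s ×ˢ Icc a b)) :
    ContinuousOn (fun x => ∫ y in a..b, q x y) s := by
  rw [continuousOn_iff_continuous_domRestrict]
  have h1 : Continuous (fun p : s × ℝ => q p.1 (projIcc a b hab p.2)) := by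
    refine hq.comp_continuous (f := fun p : s × ℝ => ((p.1 : X), ((projIcc a b hab p.2 : Icc a b) : ℝ)))
      ?_ ?_
    · exact (continuous_subtype_val.comp continuous_fst).prodMk
        (continuous_subtype_val.comp (continuous_projIcc.comp continuous_snd))
    · intro p
      exact ⟨p.1.2, (projIcc a b hab p.2).2⟩
  have h2 := intervalIntegral.continuous_parametric_intervalIntegral_of_continuous'
    (μ := volume) (f := fun (x : s) (y : ℝ) => q x (projIcc a b hab y)) h1 a b
  convert h2 using 2 with x
  simp only [domRestrict_apply]
  apply intervalIntegral.integral_congr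
  intro y hy
  rw [uIcc_of_le hab] at hy
  simp [projIcc_of_mem hab hy]

lemma par_deriv {U : Set ℝ} (hU : IsOpen U) {q q' : ℝ → ℝ → ℝ} {a b : ℝ} (hab : a ≤ b)
    (hq : ContinuousOn (fun p : ℝ × ℝ => q p.1 p.2) (U ×ˢ Icc a b))
    (hq' : ContinuousOn (fun p : ℝ × ℝ => q' p.1 p.2) (U ×ˢ Icc a b))
    (hd : ∀ x ∈ U, ∀ y ∈ Icc a b, HasDerivAt (fun x => q x y) (q' x y) x) {x₀ : ℝ} (hx₀ : x₀ ∈ U) :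
    HasDerivAt (fun x => ∫ y in a..b, q x y) (∫ y in a..b, q' x₀ y) x₀ := by
  obtain ⟨r, hr, hrU⟩ := Metric.nhds_basis_closedBall.mem_iff.1 (hU.mem_nhds hx₀)
  have hK : IsCompact (Metric.closedBall x₀ r ×ˢ Icc a b) :=
    (isCompact_closedBall x₀ r).prod isCompact_Icc
  obtain ⟨C, hC⟩ := hK.exists_bound_of_continuousOn (hq'.mono (prod_mono hrU le_rfl))
  have hsl : ∀ (f : ℝ → ℝ → ℝ), ContinuousOn (fun p : ℝ × ℝ => f p.1 p.2) (U ×ˢ Icc a b) →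
      ∀ x ∈ U, IntervalIntegrable (f x) volume a b := by
    intro f hf x hx
    apply ContinuousOn.intervalIntegrable
    rw [uIcc_of_le hab]
    exact hf.comp (f := fun y => (x, y)) (by fun_prop) (fun y hy => ⟨hx, hy⟩)
  have hm : ∀ (f : ℝ → ℝ → ℝ), ContinuousOn (fun p : ℝ × ℝ => f p.1 p.2) (U ×ˢ Icc a b) →
      ∀ x ∈ U, AEStronglyMeasurable (f x) (volume.restrict (Set.uIoc a b)) := by
    intro f hf x hx
    exact (intervalIntegrable_iff.1 (hsl f hf x hx)).aestronglyMeasurable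
  refine (intervalIntegral.hasDerivAt_integral_of_dominated_loc_of_deriv_le
    (bound := fun _ => C) (Metric.closedBall_mem_nhds x₀ hr) ?_ (hsl q hq x₀ hx₀) (hm q' hq' x₀ hx₀)
    ?_ (by simp) ?_).2
  · filter_upwards [hU.mem_nhds hx₀] with x hx using hm q hq x hx
  · refine Eventually.of_forall fun y hy x hx => ?_
    rw [uIoc_of_le hab] at hy
    exact hC (x, y) ⟨hx, Ioc_subset_Icc_self hy⟩
  · refine Eventually.of_forall fun y hy x hx => ?_
    rw [uIoc_of_le hab] at hy
    exact hd x (hrU hx) y (Ioc_subset_Icc_self hy)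

/-! ### The limiting argument: removing small polar caps -/

/-- abstract version: `f` has `t`-derivative `k + ∂_θ B` with `f, k` bounded and `B = O(sin θ)`. -/
lemma cap_limit {f f' k B : ℝ → ℝ → ℝ}
    (hf : ContinuousOn (fun p : ℝ × ℝ => f p.1 p.2) (Ioi 0 ×ˢ Ioo 0 π))
    (hf' : ContinuousOn (fun p : ℝ × ℝ => f' p.1 p.2) (Ioi 0 ×ˢ Ioo 0 π))
    (hk : ContinuousOn (fun p : ℝ × ℝ => k p.1 p.2) (Ioi 0 ×ˢ Ioo 0 π))
    (hd : ∀ t ∈ Ioi (0 : ℝ), ∀ θ ∈ Ioo 0 π, HasDerivAt (fun s => f s θ) (f' t θ) t)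
    (hB : ∀ t ∈ Ioi (0 : ℝ), ∀ θ ∈ Ioo 0 π, HasDerivAt (fun x => B t x) (f' t θ - k t θ) θ)
    (hbd : ∀ a b : ℝ, 0 < a → ∃ C, 0 ≤ C ∧ ∀ t ∈ Icc a b, ∀ θ ∈ Ioo 0 π,
      |f t θ| ≤ C ∧ |k t θ| ≤ C ∧ |B t θ| ≤ C * sin θ) {t : ℝ} (ht : 0 < t) :
    HasDerivAt (fun s => ∫ θ in Ioo 0 π, f s θ) (∫ θ in Ioo 0 π, k t θ) t := by
  have hpi := Real.pi_pos
  set ε : ℕ → ℝ := fun n => (π / 2) / ((n : ℝ) + 2) with hε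
  have hε0 : ∀ n, 0 < ε n := fun n => by positivity
  have hε1 : ∀ n, ε n < π / 2 := fun n => by
    rw [hε]; simp only
    rw [div_lt_iff₀ (by positivity)]
    have : (0 : ℝ) ≤ n := by positivity
    nlinarith
  have hεlim : Tendsto ε atTop (𝓝 0) := by
    have h1 : Tendsto (fun n : ℕ => (n : ℝ) + 2) atTop atTop :=
      tendsto_atTop_add_const_right _ _ tendsto_natCast_atTop_atTop
    exact h1.const_div_atTop _
  have hIcc : ∀ n, Icc (ε n) (π - ε n) ⊆ Ioo 0 π := fun n x hx =>
    ⟨lt_of_lt_of_le (hε0 n) hx.1, lt_of_le_of_lt hx.2 (by linarith [hε0 n])⟩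
  have hle : ∀ n, ε n ≤ π - ε n := fun n => by linarith [hε1 n]
  -- integrability
  have hintg : ∀ (g : ℝ → ℝ → ℝ), ContinuousOn (fun p : ℝ × ℝ => g p.1 p.2) (Ioi 0 ×ˢ Ioo 0 π) →
      ∀ C s, 0 < s → (∀ θ ∈ Ioo 0 π, |g s θ| ≤ C) → IntervalIntegrable (g s) volume 0 π := by
    intro g hg C s hs hC
    rw [intervalIntegrable_iff_integrableOn_Ioo_of_le hpi.le]
    have hc : ContinuousOn (g s) (Ioo 0 π) :=
      hg.comp (f := fun y => (s, y)) (by fun_prop) (fun y hy => ⟨hs, hy⟩)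
    refine Integrable.mono' (g := fun _ => C) (by simp) (hc.aestronglyMeasurable measurableSet_Ioo) ?_
    exact (ae_restrict_iff' measurableSet_Ioo).2 (Eventually.of_forall hC)
  -- cap estimate
  have hcap : ∀ (g : ℝ → ℝ → ℝ), ContinuousOn (fun p : ℝ × ℝ => g p.1 p.2) (Ioi 0 ×ˢ Ioo 0 π) →
      ∀ C s n, 0 < s → (∀ θ ∈ Ioo 0 π, |g s θ| ≤ C) →
      |(∫ θ in Ioo 0 π, g s θ) - ∫ θ in (ε n)..(π - ε n), g s θ| ≤ 2 * C * ε n := by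
    intro g hg C s n hs hC
    have hI := hintg g hg C s hs hC
    have e1 : (∫ θ in Ioo 0 π, g s θ) = ∫ θ in (0 : ℝ)..π, g s θ := by
      rw [intervalIntegral.integral_of_le hpi.le, integral_Ioc_eq_integral_Ioo]
    have sub : ∀ x y, 0 ≤ x → x ≤ y → y ≤ π → IntervalIntegrable (g s) volume x y :=
      fun x y h1 h2 h3 => hI.mono_set (by
        rw [uIcc_of_le h2, uIcc_of_le hpi.le]; exact Icc_subset_Icc h1 h3)
    have h0 := hε0 n
    have h1 := hε1 n
    have e2 := intervalIntegral.integral_add_adjacent_intervals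
      (sub 0 (ε n) le_rfl h0.le (by linarith)) (sub (ε n) (π - ε n) h0.le (hle n) (by linarith))
    have e3 := intervalIntegral.integral_add_adjacent_intervals
      (sub 0 (π - ε n) le_rfl (by linarith) (by linarith))
      (sub (π - ε n) π (by linarith) (by linarith) le_rfl)
    have b1 : |∫ θ in (0 : ℝ)..(ε n), g s θ| ≤ C * |ε n - 0| := by
      rw [intervalIntegral.integral_of_le h0.le, integral_Ioc_eq_integral_Ioo]
      have := norm_setIntegral_le_of_norm_le_const (μ := volume) (s := Ioo 0 (ε n)) (f := g s) (C := C)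
        (by simp) (fun x hx => hC x ⟨hx.1, by linarith [hx.2]⟩)
      simpa [Measure.real, abs_of_pos h0, h0.le] using this
    have b2 : |∫ θ in (π - ε n)..π, g s θ| ≤ C * |π - (π - ε n)| := by
      rw [intervalIntegral.integral_of_le (by linarith), integral_Ioc_eq_integral_Ioo]
      have := norm_setIntegral_le_of_norm_le_const (μ := volume) (s := Ioo (π - ε n) π) (f := g s) (C := C)
        (by simp) (fun x hx => hC x ⟨by linarith [hx.1], hx.2⟩)
      simpa [Measure.real, abs_of_pos h0, h0.le] using this
    rw [sub_zero, abs_of_pos h0] at b1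
    rw [sub_sub_cancel, abs_of_pos h0] at b2
    rw [e1, ← e3, ← e2]
    rw [abs_le] at *
    constructor <;> linarith [b1.1, b1.2, b2.1, b2.2]
  set F : ℕ → ℝ → ℝ := fun n s => ∫ θ in (ε n)..(π - ε n), f s θ with hFdef
  set F' : ℕ → ℝ → ℝ := fun n s => ∫ θ in (ε n)..(π - ε n), f' s θ with hF'def
  have hF : ∀ n, ∀ s ∈ Ioo (t / 2) (t + 1), HasDerivAt (F n) (F' n s) s := by
    intro n s hs
    refine par_deriv isOpen_Ioi (hle n) (hf.mono (prod_mono le_rfl (hIcc n)))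
      (hf'.mono (prod_mono le_rfl (hIcc n))) (fun x hx y hy => hd x hx y (hIcc n hy)) ?_
    exact lt_trans (by positivity : (0 : ℝ) < t / 2) hs.1
  have hF'eq : ∀ n, ∀ s, 0 < s → F' n s =
      (∫ θ in (ε n)..(π - ε n), k s θ) + (B s (π - ε n) - B s (ε n)) := by
    intro n s hs
    have sl : ∀ (g : ℝ → ℝ → ℝ), ContinuousOn (fun p : ℝ × ℝ => g p.1 p.2) (Ioi 0 ×ˢ Ioo 0 π) →
        IntervalIntegrable (g s) volume (ε n) (π - ε n) := by
      intro g hg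
      apply ContinuousOn.intervalIntegrable
      rw [uIcc_of_le (hle n)]
      exact hg.comp (f := fun y => (s, y)) (by fun_prop) (fun y hy => ⟨hs, hIcc n hy⟩)
    have := intervalIntegral.integral_eq_sub_of_hasDerivAt (a := ε n) (b := π - ε n)
      (f := fun x => B s x) (f' := fun x => f' s x - k s x)
      (fun x hx => hB s hs x (hIcc n (by rwa [uIcc_of_le (hle n)] at hx)))
      ((sl f' hf').sub (sl k hk))
    rw [← this, intervalIntegral.integral_sub (sl f' hf') (sl k hk)]
    simp [hF'def]
  obtain ⟨C, hC0, hC⟩ := hbd (t / 2) (t + 1) (by positivity)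
  have hmain : TendstoUniformlyOn F' (fun s => ∫ θ in Ioo 0 π, k s θ) atTop (Ioo (t / 2) (t + 1)) := by
    rw [Metric.tendstoUniformlyOn_iff]
    intro η hη
    have hl : Tendsto (fun n => 4 * C * ε n) atTop (𝓝 0) := by simpa using hεlim.const_mul (4 * C)
    filter_upwards [hl.eventually (gt_mem_nhds hη)] with n hn s hs
    have hs0 : 0 < s := lt_trans (by positivity : (0 : ℝ) < t / 2) hs.1
    have hs' := Ioo_subset_Icc_self hs
    have h1 := hcap k hk C s n hs0 (fun θ hθ => (hC s hs' θ hθ).2.1)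
    have h0 := hε0 n
    have h0' := hε1 n
    have hB1 := (hC s hs' (ε n) (hIcc n ⟨le_rfl, hle n⟩)).2.2
    have hB2 := (hC s hs' (π - ε n) (hIcc n ⟨hle n, le_rfl⟩)).2.2
    have hsin := mul_le_mul_of_nonneg_left (Real.sin_le h0.le) hC0
    rw [Real.sin_pi_sub] at hB2
    rw [Real.dist_eq, hF'eq n s hs0]
    refine lt_of_le_of_lt ?_ hn
    rw [abs_le] at *
    constructor <;> linarith [h1.1, h1.2, hB1.1, hB1.2, hB2.1, hB2.2]
  refine hasDerivAt_of_tendstoUniformlyOn (g' := fun s => ∫ θ in Ioo 0 π, k s θ)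
    isOpen_Ioo hmain (Eventually.of_forall hF) ?_
    (show t ∈ Ioo (t / 2) (t + 1) from ⟨by linarith, by linarith⟩)
  intro s hs
  have hs0 : 0 < s := lt_trans (by positivity : (0 : ℝ) < t / 2) hs.1
  have hs' := Ioo_subset_Icc_self hs
  rw [tendsto_iff_dist_tendsto_zero]
  have hl : Tendsto (fun n => 2 * C * ε n) atTop (𝓝 0) := by simpa using hεlim.const_mul (2 * C)
  refine squeeze_zero (fun n => dist_nonneg) (fun n => ?_) hl
  rw [dist_comm, Real.dist_eq]
  exact hcap f hf C s n hs0 (fun θ hθ => (hC s hs' θ hθ).1)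

/-! ### Interior identity -/

/-- `e^{4u}` -/
def EE (P W : ℝ × ℝ × ℝ → ℝ) : ℝ × ℝ × ℝ → ℝ := fun p => Real.exp (4 * (P p - W p))

/-- the Laplacian on the sphere -/
def lapD (W : ℝ × ℝ × ℝ → ℝ) : ℝ × ℝ × ℝ → ℝ := fun p =>
  DD eth (DD eth W) p + (cos p.2.1 / sin p.2.1) * DD eth W p
    + (sin p.2.1 ^ 2)⁻¹ * DD eph (DD eph W) p

/-- kinetic density -/
def kk (P V W : ℝ × ℝ × ℝ → ℝ) : ℝ × ℝ × ℝ → ℝ := fun p =>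
  DD et P p ^ 2 + EE P W p * DD et V p ^ 2

/-- `|∇_{g₀} P|²` -/
def gr (P : ℝ × ℝ × ℝ → ℝ) : ℝ × ℝ × ℝ → ℝ := fun p =>
  DD eth P p * DD eth P p + (sin p.2.1 ^ 2)⁻¹ * DD eph P p * DD eph P p

/-- potential density -/
def gE (P V W : ℝ × ℝ × ℝ → ℝ) : ℝ × ℝ × ℝ → ℝ := fun p =>
  gr P p + EE P W p * gr V p + 2 * lapD W p * P p

/-- total weighted density -/
def qq (P V W : ℝ × ℝ × ℝ → ℝ) : ℝ × ℝ × ℝ → ℝ := fun p =>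
  (1 / 2) * (kk P V W p - gE P V W p) * sin p.2.1

/-- `θ` flux -/
def bb (P V W : ℝ × ℝ × ℝ → ℝ) : ℝ × ℝ × ℝ → ℝ := fun p =>
  -(sin p.2.1 * (DD et P p * DD eth P p + EE P W p * (DD et V p * DD eth V p)))

/-- `φ` flux -/
def cc (P V W : ℝ × ℝ × ℝ → ℝ) : ℝ × ℝ × ℝ → ℝ := fun p =>
  -((sin p.2.1)⁻¹ * (DD et P p * DD eph P p + EE P W p * (DD et V p * DD eph V p)))

lemma sin_ne_Omo {p : ℝ × ℝ × ℝ} (hp : p ∈ Omo) : sin p.2.1 ≠ 0 :=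
  (Real.sin_pos_of_mem_Ioo hp.2.1).ne'

lemma sinp_cd {n : WithTop ℕ∞} : ContDiffOn ℝ n (fun p : ℝ × ℝ × ℝ => sin p.2.1) Omo :=
  (Real.contDiff_sin.comp (contDiff_fst.comp contDiff_snd)).contDiffOn

lemma cosp_cd {n : WithTop ℕ∞} : ContDiffOn ℝ n (fun p : ℝ × ℝ × ℝ => cos p.2.1) Omo :=
  (Real.contDiff_cos.comp (contDiff_fst.comp contDiff_snd)).contDiffOn

section interior
variable {P V W : ℝ × ℝ × ℝ → ℝ}

lemma EE_cd (hP : ContDiffOn ℝ (3 : ℕ) P Omo) (hW : ContDiffOn ℝ (3 : ℕ) W Omo) :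
    ContDiffOn ℝ (1 : ℕ) (EE P W) Omo :=
  ((contDiffOn_const.mul (hP.sub hW)).exp).of_le (by norm_num)

lemma D1_cd (hP : ContDiffOn ℝ (3 : ℕ) P Omo) (e : ℝ × ℝ × ℝ) :
    ContDiffOn ℝ (1 : ℕ) (DD e P) Omo := (DD_contDiffOn_o (n := 2) e hP).of_le (by norm_num)

lemma D2_cd (hP : ContDiffOn ℝ (3 : ℕ) P Omo) (e f : ℝ × ℝ × ℝ) :
    ContDiffOn ℝ (1 : ℕ) (DD f (DD e P)) Omo :=
  DD_contDiffOn_o (n := 1) f (DD_contDiffOn_o (n := 2) e hP)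

lemma kk_cd (hP : ContDiffOn ℝ (3 : ℕ) P Omo) (hV : ContDiffOn ℝ (3 : ℕ) V Omo)
    (hW : ContDiffOn ℝ (3 : ℕ) W Omo) : ContDiffOn ℝ (1 : ℕ) (kk P V W) Omo :=
  ((D1_cd hP et).pow 2).add ((EE_cd hP hW).mul ((D1_cd hV et).pow 2))

lemma sin2_cd : ContDiffOn ℝ (1 : ℕ) (fun p : ℝ × ℝ × ℝ => (sin p.2.1 ^ 2)⁻¹) Omo :=
  (sinp_cd.pow 2).inv (fun _ hp => pow_ne_zero 2 (sin_ne_Omo hp))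

lemma gr_cd (hP : ContDiffOn ℝ (3 : ℕ) P Omo) : ContDiffOn ℝ (1 : ℕ) (gr P) Omo :=
  ((D1_cd hP eth).mul (D1_cd hP eth)).add ((sin2_cd.mul (D1_cd hP eph)).mul (D1_cd hP eph))

lemma lapD_cd (hP : ContDiffOn ℝ (3 : ℕ) P Omo) : ContDiffOn ℝ (1 : ℕ) (lapD P) Omo :=
  ((D2_cd hP eth eth).add ((cosp_cd.div sinp_cd (fun _ hp => sin_ne_Omo hp)).mul
    (D1_cd hP eth))).add (sin2_cd.mul (D2_cd hP eph eph))

lemma gE_cd (hP : ContDiffOn ℝ (3 : ℕ) P Omo) (hV : ContDiffOn ℝ (3 : ℕ) V Omo)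
    (hW : ContDiffOn ℝ (3 : ℕ) W Omo) : ContDiffOn ℝ (1 : ℕ) (gE P V W) Omo :=
  ((gr_cd hP).add ((EE_cd hP hW).mul (gr_cd hV))).add
    ((contDiffOn_const.mul (lapD_cd hW)).mul (hP.of_le (by norm_num)))

lemma qq_cd (hP : ContDiffOn ℝ (3 : ℕ) P Omo) (hV : ContDiffOn ℝ (3 : ℕ) V Omo)
    (hW : ContDiffOn ℝ (3 : ℕ) W Omo) : ContDiffOn ℝ (1 : ℕ) (qq P V W) Omo :=
  (contDiffOn_const.mul ((kk_cd hP hV hW).sub (gE_cd hP hV hW))).mul sinp_cd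

lemma bb_cd (hP : ContDiffOn ℝ (3 : ℕ) P Omo) (hV : ContDiffOn ℝ (3 : ℕ) V Omo)
    (hW : ContDiffOn ℝ (3 : ℕ) W Omo) : ContDiffOn ℝ (1 : ℕ) (bb P V W) Omo :=
  (sinp_cd.mul (((D1_cd hP et).mul (D1_cd hP eth)).add
    ((EE_cd hP hW).mul ((D1_cd hV et).mul (D1_cd hV eth))))).neg

lemma cc_cd (hP : ContDiffOn ℝ (3 : ℕ) P Omo) (hV : ContDiffOn ℝ (3 : ℕ) V Omo)
    (hW : ContDiffOn ℝ (3 : ℕ) W Omo) : ContDiffOn ℝ (1 : ℕ) (cc P V W) Omo :=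
  ((sinp_cd.inv (fun _ hp => sin_ne_Omo hp)).mul (((D1_cd hP et).mul (D1_cd hP eph)).add
    ((EE_cd hP hW).mul ((D1_cd hV et).mul (D1_cd hV eph))))).neg

lemma o_t {F : ℝ × ℝ × ℝ → ℝ} (h : ContDiffOn ℝ (1 : ℕ) F Omo) {t θ φ : ℝ}
    (hp : (t, θ, φ) ∈ Omo) : HasDerivAt (fun x => F (x, θ, φ)) (DD et F (t, θ, φ)) t :=
  DD_t (Omo_sub hp) (DDo_diff hp le_rfl h)

lemma o_th {F : ℝ × ℝ × ℝ → ℝ} (h : ContDiffOn ℝ (1 : ℕ) F Omo) {t θ φ : ℝ}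
    (hp : (t, θ, φ) ∈ Omo) : HasDerivAt (fun x => F (t, x, φ)) (DD eth F (t, θ, φ)) θ :=
  DD_th hp (DDo_diff hp le_rfl h)

lemma o_ph {F : ℝ × ℝ × ℝ → ℝ} (h : ContDiffOn ℝ (1 : ℕ) F Omo) {t θ φ : ℝ}
    (hp : (t, θ, φ) ∈ Omo) : HasDerivAt (fun x => F (t, θ, x)) (DD eph F (t, θ, φ)) φ :=
  DD_ph (Omo_sub hp) (DDo_diff hp le_rfl h)

lemma EE_t (hP : ContDiffOn ℝ (3 : ℕ) P Omo) {t θ φ : ℝ} (hp : (t, θ, φ) ∈ Omo)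
    (hWt : ∀ t t' θ φ : ℝ, W (t, θ, φ) = W (t', θ, φ)) :
    HasDerivAt (fun x => EE P W (x, θ, φ)) (EE P W (t, θ, φ) * (4 * DD et P (t, θ, φ))) t := by
  have hP1 : ContDiffOn ℝ (1 : ℕ) P Omo := hP.of_le (by norm_num)
  have Wc : HasDerivAt (fun x => W (x, θ, φ)) 0 t := by
    have : (fun x => W (x, θ, φ)) = fun _ => W (t, θ, φ) := by
      funext x; exact hWt x t θ φ
    rw [this]; exact hasDerivAt_const _ _
  have := (((o_t hP1 hp).fun_sub Wc).const_mul 4).exp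
  rw [sub_zero] at this
  exact this

lemma EE_th (hP : ContDiffOn ℝ (3 : ℕ) P Omo) (hW : ContDiffOn ℝ (3 : ℕ) W Omo)
    {t θ φ : ℝ} (hp : (t, θ, φ) ∈ Omo) :
    HasDerivAt (fun x => EE P W (t, x, φ))
      (EE P W (t, θ, φ) * (4 * (DD eth P (t, θ, φ) - DD eth W (t, θ, φ)))) θ :=
  (((o_th (hP.of_le (by norm_num)) hp).fun_sub (o_th (hW.of_le (by norm_num)) hp)).const_mul 4).exp

lemma EE_ph (hP : ContDiffOn ℝ (3 : ℕ) P Omo) (hW : ContDiffOn ℝ (3 : ℕ) W Omo)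
    {t θ φ : ℝ} (hp : (t, θ, φ) ∈ Omo) :
    HasDerivAt (fun x => EE P W (t, θ, x))
      (EE P W (t, θ, φ) * (4 * (DD eph P (t, θ, φ) - DD eph W (t, θ, φ)))) φ :=
  (((o_ph (hP.of_le (by norm_num)) hp).fun_sub (o_ph (hW.of_le (by norm_num)) hp)).const_mul 4).exp

/-- scalar product rule for the total density -/
lemma sc_q {a b e c d g h l y : ℝ → ℝ} {a' b' e' c' d' g' h' y' : ℝ} {t i s : ℝ}
    (ha : HasDerivAt a a' t) (hb : HasDerivAt b b' t) (he : HasDerivAt e e' t)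
    (hc : HasDerivAt c c' t) (hd : HasDerivAt d d' t) (hg : HasDerivAt g g' t)
    (hh : HasDerivAt h h' t) (hl : HasDerivAt l 0 t) (hy : HasDerivAt y y' t) :
    HasDerivAt (fun x => (1 / 2) * ((a x ^ 2 + e x * b x ^ 2) -
      ((c x * c x + i * d x * d x) + e x * (g x * g x + i * h x * h x) + 2 * l x * y x)) * s)
      ((a t * a' + e t * (b t * b') + (1 / 2) * e' * b t ^ 2 - (c t * c' + i * d t * d')
        - e t * (g t * g' + i * h t * h') - (1 / 2) * e' * (g t * g t + i * h t * h t) - l t * y') * s)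
      t := by
  have := ((((ha.fun_pow 2).fun_add (he.fun_mul (hb.fun_pow 2))).fun_sub
    ((((hc.fun_mul hc).fun_add ((hd.const_mul i).fun_mul hd)).fun_add
      (he.fun_mul ((hg.fun_mul hg).fun_add ((hh.const_mul i).fun_mul hh)))).fun_add
      ((hl.const_mul 2).fun_mul hy))).const_mul (1 / 2)).mul_const s
  refine this.congr_deriv ?_
  push_cast
  ring

/-- scalar product rule for the fluxes -/
lemma sc_b {r a b e c d : ℝ → ℝ} {r' a' b' e' c' d' : ℝ} {t : ℝ} (hr : HasDerivAt r r' t)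
    (ha : HasDerivAt a a' t) (hb : HasDerivAt b b' t) (he : HasDerivAt e e' t)
    (hc : HasDerivAt c c' t) (hd : HasDerivAt d d' t) :
    HasDerivAt (fun x => -(r x * (a x * b x + e x * (c x * d x))))
      (-(r' * (a t * b t + e t * (c t * d t)) + r t * (a' * b t + a t * b' +
        (e' * (c t * d t) + e t * (c' * d t + c t * d'))))) t :=
  (hr.fun_mul ((ha.fun_mul hb).fun_add (he.fun_mul (hc.fun_mul hd)))).fun_neg

lemma algebra_identity (Pt Pth Pph Ptt Ptth Ptph Pthth Pphph
    Vt Vth Vph Vtt Vtth Vtph Vthth Vphph Wth Wph E L s c i : ℝ) (hsi : s * i = 1)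
    (eqP : Ptt - Pt + (Pthth + c / s * Pth + (s ^ 2)⁻¹ * Pphph)
      = 2 * E * (Vt * Vt + (Vth * Vth + (s ^ 2)⁻¹ * Vph * Vph)) + L)
    (eqV : Vtt - Vt + (Vthth + c / s * Vth + (s ^ 2)⁻¹ * Vphph)
      = -4 * (Pt * Vt + ((Pth - Wth) * Vth + (s ^ 2)⁻¹ * (Pph - Wph) * Vph))) :
    ((Pt * Ptt + E * (Vt * Vtt) + (1 / 2) * (E * (4 * Pt)) * Vt ^ 2
        - (Pth * Ptth + (s ^ 2)⁻¹ * Pph * Ptph)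
        - E * (Vth * Vtth + (s ^ 2)⁻¹ * Vph * Vtph)
        - (1 / 2) * (E * (4 * Pt)) * (Vth * Vth + (s ^ 2)⁻¹ * Vph * Vph) - L * Pt) * s)
    = (Pt ^ 2 + E * Vt ^ 2) * s
      + (-(c * (Pt * Pth + E * (Vt * Vth)) + s * (Ptth * Pth + Pt * Pthth +
        (E * (4 * (Pth - Wth)) * (Vt * Vth) + E * (Vtth * Vth + Vt * Vthth)))))
      + (-(0 * (Pt * Pph + E * (Vt * Vph)) + i * (Ptph * Pph + Pt * Pphph +
        (E * (4 * (Pph - Wph)) * (Vt * Vph) + E * (Vtph * Vph + Vt * Vphph))))) := by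
  have hs : s ≠ 0 := left_ne_zero_of_mul_eq_one hsi
  have hi : i = s⁻¹ := eq_inv_of_mul_eq_one_right hsi
  subst hi
  have e1 : Ptt = Pt - (Pthth + c / s * Pth + (s ^ 2)⁻¹ * Pphph) +
    (2 * E * (Vt * Vt + (Vth * Vth + (s ^ 2)⁻¹ * Vph * Vph)) + L) := by linarith
  have e2 : Vtt = Vt - (Vthth + c / s * Vth + (s ^ 2)⁻¹ * Vphph) +
    (-4 * (Pt * Vt + ((Pth - Wth) * Vth + (s ^ 2)⁻¹ * (Pph - Wph) * Vph))) := by linarith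
  rw [e1, e2]
  field_simp
  ring

lemma interior_identity (hP : ContDiffOn ℝ (3 : ℕ) P Omo) (hV : ContDiffOn ℝ (3 : ℕ) V Omo)
    (hW : ContDiffOn ℝ (3 : ℕ) W Omo)
    {p : ℝ × ℝ × ℝ} (hp : p ∈ Omo)
    (hWt : ∀ t t' θ φ : ℝ, W (t, θ, φ) = W (t', θ, φ))
    (hLt : ∀ t t' θ φ : ℝ, 0 < t → 0 < t' → θ ∈ Ioo 0 π → lapD W (t, θ, φ) = lapD W (t', θ, φ))
    (eqP : DD et (DD et P) p - DD et P p + lapD P p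
      = 2 * EE P W p * (DD et V p * DD et V p + gr V p) + lapD W p)
    (eqV : DD et (DD et V) p - DD et V p + lapD V p
      = -4 * (DD et P p * DD et V p + ((DD eth P p - DD eth W p) * DD eth V p
        + (sin p.2.1 ^ 2)⁻¹ * (DD eph P p - DD eph W p) * DD eph V p))) :
    DD et (qq P V W) p = kk P V W p * sin p.2.1 + DD eth (bb P V W) p + DD eph (cc P V W) p := by
  obtain ⟨t, θ, φ⟩ := p
  have hp' := mem_Omo.1 hp
  have hs : sin θ ≠ 0 := (Real.sin_pos_of_mem_Ioo hp'.2).ne'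
  have hP2 : ContDiffOn ℝ 2 P Omo := hP.of_le (by norm_num)
  have hV2 : ContDiffOn ℝ 2 V Omo := hV.of_le (by norm_num)
  have Lc : HasDerivAt (fun x => lapD W (x, θ, φ)) 0 t := by
    have : (fun x => lapD W (x, θ, φ)) =ᶠ[𝓝 t] fun _ => lapD W (t, θ, φ) := by
      filter_upwards [Ioi_mem_nhds hp'.1] with x hx using hLt x t θ φ hx hp'.1 hp'.2
    exact (hasDerivAt_const _ _).congr_of_eventuallyEq this
  have qt := sc_q (i := (sin θ ^ 2)⁻¹) (s := sin θ) (o_t (D1_cd hP et) hp) (o_t (D1_cd hV et) hp)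
    (EE_t hP hp hWt) (o_t (D1_cd hP eth) hp) (o_t (D1_cd hP eph) hp) (o_t (D1_cd hV eth) hp)
    (o_t (D1_cd hV eph) hp) Lc (o_t (hP.of_le (by norm_num)) hp)
  have bt := sc_b (Real.hasDerivAt_sin θ) (o_th (D1_cd hP et) hp) (o_th (D1_cd hP eth) hp)
    (EE_th hP hW hp) (o_th (D1_cd hV et) hp) (o_th (D1_cd hV eth) hp)
  have ct := sc_b (hasDerivAt_const φ (sin θ)⁻¹) (o_ph (D1_cd hP et) hp) (o_ph (D1_cd hP eph) hp)
    (EE_ph hP hW hp) (o_ph (D1_cd hV et) hp) (o_ph (D1_cd hV eph) hp)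
  rw [(o_t (qq_cd hP hV hW) hp).unique qt, (o_th (bb_cd hP hV hW) hp).unique bt,
    (o_ph (cc_cd hP hV hW) hp).unique ct]
  rw [DDo_symm hp hP2 eth et, DDo_symm hp hP2 eph et, DDo_symm hp hV2 eth et,
    DDo_symm hp hV2 eph et]
  exact algebra_identity _ _ _ _ _ _ _ _ _ _ _ _ _ _ _ _ _ _ _ _ _ _ _
    (mul_inv_cancel₀ hs) eqP eqV
end interior

/-! ### Assembling the integral identity from bounds -/

lemma assoc_cont {F : ℝ × ℝ × ℝ → ℝ} (h : ContinuousOn F Omo) :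
    ContinuousOn (fun p : ℝ × ℝ => ∫ φ in (0 : ℝ)..(2 * π), F (p.1, p.2, φ)) (Ioi 0 ×ˢ Ioo 0 π) := by
  refine par_cont (q := fun (p : ℝ × ℝ) φ => F (p.1, p.2, φ)) 0 (2 * π) (by positivity) ?_
  refine h.comp (f := fun p : (ℝ × ℝ) × ℝ => (p.1.1, p.1.2, p.2)) (by fun_prop) ?_
  rintro ⟨⟨t, θ⟩, φ⟩ hp
  exact mem_Omo.2 ⟨hp.1.1, hp.1.2⟩

lemma DDo_cont {F : ℝ × ℝ × ℝ → ℝ} (e : ℝ × ℝ × ℝ) (h : ContDiffOn ℝ (1 : ℕ) F Omo) :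
    ContinuousOn (DD e F) Omo := (DD_contDiffOn_o (n := 0) e h).continuousOn

lemma slice_int {F : ℝ × ℝ × ℝ → ℝ} (h : ContinuousOn F Omo) {t θ : ℝ} (ht : 0 < t)
    (hθ : θ ∈ Ioo 0 π) : IntervalIntegrable (fun φ => F (t, θ, φ)) volume 0 (2 * π) := by
  apply ContinuousOn.intervalIntegrable
  exact h.comp (f := fun φ => (t, θ, φ)) (by fun_prop) (fun y _ => mem_Omo.2 ⟨ht, hθ⟩)

lemma bound_int {F : ℝ → ℝ} {C : ℝ} (h : ∀ φ ∈ Icc 0 (2 * π), |F φ| ≤ C) :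
    |∫ φ in (0 : ℝ)..(2 * π), F φ| ≤ C * (2 * π) := by
  have hpi : (0 : ℝ) ≤ 2 * π := by positivity
  have := intervalIntegral.norm_integral_le_of_norm_le_const (a := 0) (b := 2 * π) (f := F) (C := C)
    (fun x hx => h x (by rw [uIoc_of_le hpi] at hx; exact Ioc_subset_Icc_self hx))
  rwa [sub_zero, abs_of_nonneg hpi, Real.norm_eq_abs] at this

lemma abstract_main {P V W : ℝ × ℝ × ℝ → ℝ}
    (hP : ContDiffOn ℝ (3 : ℕ) P Omo) (hV : ContDiffOn ℝ (3 : ℕ) V Omo)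
    (hW : ContDiffOn ℝ (3 : ℕ) W Omo)
    (hWt : ∀ t t' θ φ : ℝ, W (t, θ, φ) = W (t', θ, φ))
    (hLt : ∀ t t' θ φ : ℝ, 0 < t → 0 < t' → θ ∈ Ioo 0 π → lapD W (t, θ, φ) = lapD W (t', θ, φ))
    (eqP : ∀ p ∈ Omo, DD et (DD et P) p - DD et P p + lapD P p
      = 2 * EE P W p * (DD et V p * DD et V p + gr V p) + lapD W p)
    (eqV : ∀ p ∈ Omo, DD et (DD et V) p - DD et V p + lapD V p
      = -4 * (DD et P p * DD et V p + ((DD eth P p - DD eth W p) * DD eth V p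
        + (sin p.2.1 ^ 2)⁻¹ * (DD eph P p - DD eph W p) * DD eph V p)))
    (hper : ∀ t θ, 0 < t → θ ∈ Ioo 0 π → cc P V W (t, θ, 2 * π) = cc P V W (t, θ, 0))
    (hbd : ∀ a b : ℝ, 0 < a → ∃ C, 0 ≤ C ∧ ∀ t ∈ Icc a b, ∀ θ ∈ Ioo 0 π, ∀ φ ∈ Icc 0 (2 * π),
      |kk P V W (t, θ, φ) * sin θ| ≤ C ∧ |gE P V W (t, θ, φ) * sin θ| ≤ C ∧
        |bb P V W (t, θ, φ)| ≤ C * sin θ)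
    {t : ℝ} (ht : 0 < t) :
    HasDerivAt (fun s =>
      (1 / 2) * (∫ θ in Ioo (0 : ℝ) π, (∫ φ in Ioo (0 : ℝ) (2 * π), kk P V W (s, θ, φ)) * sin θ)
      - (1 / 2) * (∫ θ in Ioo (0 : ℝ) π, (∫ φ in Ioo (0 : ℝ) (2 * π), gE P V W (s, θ, φ)) * sin θ))
      (∫ θ in Ioo (0 : ℝ) π, (∫ φ in Ioo (0 : ℝ) (2 * π), kk P V W (t, θ, φ)) * sin θ) t := by
  have hpi : (0 : ℝ) ≤ 2 * π := by positivity
  have cvt : ∀ (F : ℝ × ℝ × ℝ → ℝ) (s θ : ℝ), (∫ φ in Ioo (0 : ℝ) (2 * π), F (s, θ, φ)) * sin θ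
      = ∫ φ in (0 : ℝ)..(2 * π), F (s, θ, φ) * sin θ := by
    intro F s θ
    rw [intervalIntegral.integral_mul_const, intervalIntegral.integral_of_le hpi,
      integral_Ioc_eq_integral_Ioo]
  simp only [cvt]
  have sinc : ContinuousOn (fun p : ℝ × ℝ × ℝ => sin p.2.1) Omo := by fun_prop
  have ck : ContinuousOn (fun p : ℝ × ℝ × ℝ => kk P V W p * sin p.2.1) Omo :=
    (kk_cd hP hV hW).continuousOn.mul sinc
  have cg : ContinuousOn (fun p : ℝ × ℝ × ℝ => gE P V W p * sin p.2.1) Omo :=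
    (gE_cd hP hV hW).continuousOn.mul sinc
  have cqt := DDo_cont et (qq_cd hP hV hW)
  have cbt := DDo_cont eth (bb_cd hP hV hW)
  have cct := DDo_cont eph (cc_cd hP hV hW)
  have hsplit : ∀ s, 0 < s → ∀ θ ∈ Ioo 0 π, ∫ φ in (0 : ℝ)..(2 * π), qq P V W (s, θ, φ)
      = (1 / 2) * (∫ φ in (0 : ℝ)..(2 * π), kk P V W (s, θ, φ) * sin θ)
        - (1 / 2) * (∫ φ in (0 : ℝ)..(2 * π), gE P V W (s, θ, φ) * sin θ) := by
    intro s hs θ hθ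
    rw [← intervalIntegral.integral_const_mul, ← intervalIntegral.integral_const_mul,
      ← intervalIntegral.integral_sub ((slice_int ck hs hθ).const_mul _)
        ((slice_int cg hs hθ).const_mul _)]
    apply intervalIntegral.integral_congr
    intro φ _
    simp only [qq]
    ring
  have key := cap_limit (f := fun s θ => ∫ φ in (0 : ℝ)..(2 * π), qq P V W (s, θ, φ))
    (f' := fun s θ => ∫ φ in (0 : ℝ)..(2 * π), DD et (qq P V W) (s, θ, φ))
    (k := fun s θ => ∫ φ in (0 : ℝ)..(2 * π), kk P V W (s, θ, φ) * sin θ)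
    (B := fun s θ => ∫ φ in (0 : ℝ)..(2 * π), bb P V W (s, θ, φ))
    (assoc_cont (qq_cd hP hV hW).continuousOn) (assoc_cont cqt) (assoc_cont ck) ?_ ?_ ?_ ht
  · refine key.congr_of_eventuallyEq ?_
    filter_upwards [Ioi_mem_nhds ht] with s hs
    obtain ⟨C, _, hC⟩ := hbd s s hs
    have hI : ∀ F : ℝ × ℝ × ℝ → ℝ, ContinuousOn F Omo →
        (∀ θ ∈ Ioo 0 π, ∀ φ ∈ Icc 0 (2 * π), |F (s, θ, φ)| ≤ C) →
        IntegrableOn (fun θ => ∫ φ in (0 : ℝ)..(2 * π), F (s, θ, φ)) (Ioo 0 π) volume := by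
      intro F hF hb
      have hc : ContinuousOn (fun θ => ∫ φ in (0 : ℝ)..(2 * π), F (s, θ, φ)) (Ioo 0 π) :=
        (assoc_cont hF).comp (f := fun θ => (s, θ)) (by fun_prop) (fun y hy => ⟨hs, hy⟩)
      refine Integrable.mono' (g := fun _ => C * (2 * π)) (integrableOn_const (by simp))
        (hc.aestronglyMeasurable measurableSet_Ioo) ?_
      exact (ae_restrict_iff' measurableSet_Ioo).2 (Eventually.of_forall
        fun θ hθ => bound_int (hb θ hθ))
    have I1 := hI _ ck (fun θ hθ φ hφ => (hC s ⟨le_rfl, le_rfl⟩ θ hθ φ hφ).1)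
    have I2 := hI _ cg (fun θ hθ φ hφ => (hC s ⟨le_rfl, le_rfl⟩ θ hθ φ hφ).2.1)
    rw [setIntegral_congr_fun measurableSet_Ioo (hsplit s hs),
      integral_sub (I1.const_mul _) (I2.const_mul _), integral_const_mul, integral_const_mul]
  · intro s hs θ hθ
    refine par_deriv (q := fun s φ => qq P V W (s, θ, φ)) (q' := fun s φ => DD et (qq P V W) (s, θ, φ))
      isOpen_Ioi hpi ?_ ?_ ?_ hs
    · exact (qq_cd hP hV hW).continuousOn.comp (f := fun p : ℝ × ℝ => (p.1, θ, p.2)) (by fun_prop)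
        (fun p hp => mem_Omo.2 ⟨hp.1, hθ⟩)
    · exact cqt.comp (f := fun p : ℝ × ℝ => (p.1, θ, p.2)) (by fun_prop)
        (fun p hp => mem_Omo.2 ⟨hp.1, hθ⟩)
    · intro x hx y _
      exact o_t (qq_cd hP hV hW) (mem_Omo.2 ⟨hx, hθ⟩)
  · intro s hs θ hθ
    have h1 : HasDerivAt (fun x => ∫ φ in (0 : ℝ)..(2 * π), bb P V W (s, x, φ))
        (∫ φ in (0 : ℝ)..(2 * π), DD eth (bb P V W) (s, θ, φ)) θ := by
      refine par_deriv (q := fun x φ => bb P V W (s, x, φ))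
        (q' := fun x φ => DD eth (bb P V W) (s, x, φ)) isOpen_Ioo hpi ?_ ?_ ?_ hθ
      · exact (bb_cd hP hV hW).continuousOn.comp (f := fun p : ℝ × ℝ => (s, p.1, p.2)) (by fun_prop)
          (fun p hp => mem_Omo.2 ⟨hs, hp.1⟩)
      · exact cbt.comp (f := fun p : ℝ × ℝ => (s, p.1, p.2)) (by fun_prop)
          (fun p hp => mem_Omo.2 ⟨hs, hp.1⟩)
      · intro x hx y _
        exact o_th (bb_cd hP hV hW) (mem_Omo.2 ⟨hs, hx⟩)
    have h2 : ∫ φ in (0 : ℝ)..(2 * π), DD eph (cc P V W) (s, θ, φ) = 0 := by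
      rw [intervalIntegral.integral_eq_sub_of_hasDerivAt (f := fun φ => cc P V W (s, θ, φ))
        (fun x _ => o_ph (cc_cd hP hV hW) (mem_Omo.2 ⟨hs, hθ⟩)) (slice_int cct hs hθ)]
      rw [hper s θ hs hθ, sub_self]
    refine h1.congr_deriv ?_
    have h3 : ∫ φ in (0 : ℝ)..(2 * π), DD et (qq P V W) (s, θ, φ) =
        ∫ φ in (0 : ℝ)..(2 * π), (kk P V W (s, θ, φ) * sin θ + DD eth (bb P V W) (s, θ, φ)
          + DD eph (cc P V W) (s, θ, φ)) := by
      apply intervalIntegral.integral_congr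
      intro φ _
      have hp : (s, θ, φ) ∈ Omo := mem_Omo.2 ⟨hs, hθ⟩
      exact interior_identity hP hV hW hp hWt hLt (eqP _ hp) (eqV _ hp)
    rw [h3, intervalIntegral.integral_add ((slice_int ck hs hθ).add (slice_int cbt hs hθ))
      (slice_int cct hs hθ), intervalIntegral.integral_add (slice_int ck hs hθ)
      (slice_int cbt hs hθ), h2]
    ring
  · intro a b ha
    obtain ⟨C, hC0, hC⟩ := hbd a b ha
    refine ⟨C * (2 * π), by positivity, fun s hs θ hθ => ⟨?_, ?_, ?_⟩⟩
    · apply bound_int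
      intro φ hφ
      have h := hC s hs θ hθ φ hφ
      have : qq P V W (s, θ, φ) = (1 / 2) * (kk P V W (s, θ, φ) * sin θ)
          - (1 / 2) * (gE P V W (s, θ, φ) * sin θ) := by simp only [qq]; ring
      rw [this]
      have h1 := abs_le.1 h.1
      have h2 := abs_le.1 h.2.1
      exact abs_le.2 ⟨by linarith [h1.1, h2.2], by linarith [h1.2, h2.1]⟩
    · apply bound_int
      intro φ hφ
      exact (hC s hs θ hθ φ hφ).1
    · have := bound_int (F := fun φ => bb P V W (s, θ, φ)) (fun φ hφ => (hC s hs θ hθ φ hφ).2.2)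
      linarith

/-! ### Behaviour at the poles -/

lemma pole_core {F H : ℝ × ℝ × ℝ → ℝ} (hF : ContinuousOn F Om) {t₀ θ₀ φ₀ : ℝ} (ht₀ : 0 < t₀)
    (hθ₀ : θ₀ = 0 ∨ θ₀ = π) (hφ₀ : φ₀ ∈ Ico 0 (2 * π))
    (hintg : IntegrableOn H (Icc t₀ (t₀ + 1) ×ˢ (Ioo (0 : ℝ) π ×ˢ Ioo (0 : ℝ) (2 * π))) volume)
    (hb : ∀ c δ, 0 < c → 0 < δ → δ ≤ 1 → φ₀ + δ ≤ 2 * π →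
      (∀ t θ φ, t ∈ Ioo t₀ (t₀ + δ) → θ ∈ Icc 0 π → |θ - θ₀| < δ → φ ∈ Ioo φ₀ (φ₀ + δ) →
        c ≤ |F (t, θ, φ)|) →
      ∃ c' δ', 0 < c' ∧ 0 < δ' ∧ ∀ t θ φ, t ∈ Ioo t₀ (t₀ + δ') → θ ∈ Ioo 0 π → |θ - θ₀| < δ' →
        φ ∈ Ioo φ₀ (φ₀ + δ') → c' * (sin θ)⁻¹ ≤ H (t, θ, φ)) :
    F (t₀, θ₀, φ₀) = 0 := by
  by_contra hne
  have hp0 : (t₀, θ₀, φ₀) ∈ Om := by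
    refine mem_Om.2 ⟨ht₀, ?_⟩
    rcases hθ₀ with h | h <;> rw [h] <;> constructor <;> linarith [Real.pi_pos]
  have h0 : 0 < |F (t₀, θ₀, φ₀)| := abs_pos.2 hne
  have h1 := (hF _ hp0).abs.eventually (lt_mem_nhds (half_lt_self h0))
  obtain ⟨ε, hε, hε'⟩ := Metric.mem_nhdsWithin_iff.1 h1
  set δ := min ε (min 1 (2 * π - φ₀)) with hδ
  have hδ0 : 0 < δ := lt_min hε (lt_min one_pos (by linarith [hφ₀.2]))
  obtain ⟨c', δ', hc', hδ', h⟩ := hb (|F (t₀, θ₀, φ₀)| / 2) δ (half_pos h0) hδ0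
    ((min_le_right _ _).trans (min_le_left _ _))
    (by linarith [(min_le_right ε (min 1 (2 * π - φ₀))).trans (min_le_right _ _)]) (by
      intro t θ φ ht hθ hθ' hφ
      have hδε : δ ≤ ε := min_le_left _ _
      refine le_of_lt (hε' ⟨?_, mem_Om.2 ⟨by linarith [ht.1], hθ⟩⟩)
      rw [Metric.mem_ball, Prod.dist_eq, Prod.dist_eq]
      simp only [Real.dist_eq]
      refine max_lt ?_ (max_lt (by linarith) ?_)
      · rw [abs_lt]; constructor <;> linarith [ht.1, ht.2]
      · rw [abs_lt]; constructor <;> linarith [hφ.1, hφ.2])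
  exact not_int hθ₀ hφ₀ hc' hδ' hintg h

lemma pole_ext {F : ℝ × ℝ × ℝ → ℝ} (hF : ContinuousOn F Om) {t₀ θ₀ : ℝ} (ht₀ : 0 < t₀)
    (hθ₀ : θ₀ = 0 ∨ θ₀ = π) (h : ∀ φ ∈ Ico 0 (2 * π), F (t₀, θ₀, φ) = 0) :
    ∀ φ ∈ Icc 0 (2 * π), F (t₀, θ₀, φ) = 0 := by
  have hθ : θ₀ ∈ Icc 0 π := by
    rcases hθ₀ with h | h <;> rw [h] <;> constructor <;> linarith [Real.pi_pos]
  have hc : Continuous (fun φ => F (t₀, θ₀, φ)) := by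
    rw [← continuousOn_univ]
    exact hF.comp (f := fun φ => (t₀, θ₀, φ)) (by fun_prop) (fun φ _ => mem_Om.2 ⟨ht₀, hθ⟩)
  have hcl : IsClosed {φ | F (t₀, θ₀, φ) = 0} := isClosed_eq hc continuous_const
  have hsub : Ico 0 (2 * π) ⊆ {φ | F (t₀, θ₀, φ) = 0} := h
  have := hcl.closure_subset_iff.2 hsub
  rw [closure_Ico (by linarith [Real.pi_pos] : (0 : ℝ) ≠ 2 * π)] at this
  exact this

/-- the assumptions on the solution used for the boundary estimates -/
structure Hyp (P V W H G : ℝ × ℝ × ℝ → ℝ) (L A a : ℝ) : Prop where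
  hP : ContDiffOn ℝ (3 : ℕ) P Om
  hV : ContDiffOn ℝ (3 : ℕ) V Om
  hW : ContDiffOn ℝ (3 : ℕ) W Omo
  bP : ∀ p ∈ Om, |P p| ≤ L
  A0 : 0 ≤ A
  bW : ∀ p ∈ Omo, |W p - Real.log (sin p.2.1)| ≤ A
  bL : ∀ p ∈ Omo, |(lapD W p - (sin p.2.1 ^ 2)⁻¹ * DD eph (DD eph W) p) * sin p.2.1| ≤ 3 * A
  hG : ContinuousOn G Om
  eG : ∀ p ∈ Omo, G p = DD eph (DD eph W) p
  bG : ∀ p ∈ Omo, |DD eth (DD eph (DD eph W)) p| ≤ A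
  eqP : ∀ p ∈ Omo, DD et (DD et P) p - DD et P p + lapD P p
      = 2 * EE P W p * (DD et V p * DD et V p + gr V p) + lapD W p
  hH : ∀ t₀, 0 < t₀ →
    IntegrableOn H (Icc t₀ (t₀ + 1) ×ˢ (Ioo (0 : ℝ) π ×ˢ Ioo (0 : ℝ) (2 * π))) volume
  geH : ∀ p ∈ Omo, (gr P p + Real.exp (-4 * W p) * (DD et V p * DD et V p + gr V p)) * sin p.2.1
    ≤ H p
  trN : ∀ t φ, 0 < t → V (t, 0, φ) = a
  trS : ∀ t φ, 0 < t → V (t, π, φ) = -a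

lemma sin_pos_Omo {p : ℝ × ℝ × ℝ} (hp : p ∈ Omo) : 0 < sin p.2.1 :=
  Real.sin_pos_of_mem_Ioo hp.2.1

lemma gr_nonneg (V : ℝ × ℝ × ℝ → ℝ) (p : ℝ × ℝ × ℝ) : 0 ≤ gr V p := by
  have h : gr V p = DD eth V p ^ 2 + (sin p.2.1 ^ 2)⁻¹ * DD eph V p ^ 2 := by
    simp only [gr]; ring
  rw [h]; positivity

lemma abs_sub_pole {θ θ₀ : ℝ} (hθ₀ : θ₀ = 0 ∨ θ₀ = π) (hθ : θ ∈ Ioo 0 π) :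
    sin θ ≤ |θ - θ₀| := by
  rcases hθ₀ with h | h <;> rw [h]
  · rw [sub_zero, abs_of_pos hθ.1]; exact Real.sin_le hθ.1.le
  · rw [abs_of_neg (by linarith [hθ.2]), ← Real.sin_pi_sub]
    have := Real.sin_le (x := π - θ) (by linarith [hθ.2])
    linarith

lemma pole_mem {θ₀ : ℝ} (hθ₀ : θ₀ = 0 ∨ θ₀ = π) : θ₀ ∈ Icc 0 π := by
  rcases hθ₀ with h | h <;> rw [h] <;> constructor <;> linarith [Real.pi_pos]

namespace Hyp
variable {P V W H G : ℝ × ℝ × ℝ → ℝ} {L A a : ℝ}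

lemma EE_le (h : Hyp P V W H G L A a) {p : ℝ × ℝ × ℝ} (hp : p ∈ Omo) :
    EE P W p ≤ Real.exp (4 * L + 4 * A) * (sin p.2.1 ^ 4)⁻¹ := by
  have hs := sin_pos_Omo hp
  have h1 := abs_le.1 (h.bP p (Omo_sub hp))
  have h2 := abs_le.1 (h.bW p hp)
  have h3 : (sin p.2.1 ^ 4)⁻¹ = Real.exp (-4 * Real.log (sin p.2.1)) := by
    rw [← Real.exp_log (inv_pos.2 (pow_pos hs 4)), Real.log_inv, Real.log_pow]
    push_cast; ring_nf
  rw [h3, ← Real.exp_add, EE]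
  exact Real.exp_le_exp.2 (by linarith [h1.2, h2.1])

lemma expW_ge (h : Hyp P V W H G L A a) {p : ℝ × ℝ × ℝ} (hp : p ∈ Omo) :
    Real.exp (-4 * A) * (sin p.2.1 ^ 4)⁻¹ ≤ Real.exp (-4 * W p) := by
  have hs := sin_pos_Omo hp
  have h2 := abs_le.1 (h.bW p hp)
  have h3 : (sin p.2.1 ^ 4)⁻¹ = Real.exp (-4 * Real.log (sin p.2.1)) := by
    rw [← Real.exp_log (inv_pos.2 (pow_pos hs 4)), Real.log_inv, Real.log_pow]
    push_cast; ring_nf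
  rw [h3, ← Real.exp_add]
  exact Real.exp_le_exp.2 (by linarith [h2.2])

lemma expW_ge2 (h : Hyp P V W H G L A a) {p : ℝ × ℝ × ℝ} (hp : p ∈ Omo) :
    Real.exp (-4 * L) * EE P W p ≤ Real.exp (-4 * W p) := by
  have h1 := abs_le.1 (h.bP p (Omo_sub hp))
  rw [EE, ← Real.exp_add]
  exact Real.exp_le_exp.2 (by linarith [h1.2])

lemma H1 (h : Hyp P V W H G L A a) {p : ℝ × ℝ × ℝ} (hp : p ∈ Omo) :
    DD eph P p ^ 2 * (sin p.2.1)⁻¹ ≤ H p := by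
  have hs := sin_pos_Omo hp
  refine le_trans ?_ (h.geH p hp)
  have h1 : 0 ≤ Real.exp (-4 * W p) * (DD et V p * DD et V p + gr V p) :=
    mul_nonneg (Real.exp_pos _).le (add_nonneg (mul_self_nonneg _) (gr_nonneg _ _))
  have h2 : gr P p * sin p.2.1 = DD eth P p ^ 2 * sin p.2.1
      + DD eph P p ^ 2 * (sin p.2.1)⁻¹ := by
    simp only [gr]; field_simp
  have h3 : 0 ≤ DD eth P p ^ 2 * sin p.2.1 := by positivity
  nlinarith [mul_nonneg h1 hs.le]

lemma H3 (h : Hyp P V W H G L A a) {p : ℝ × ℝ × ℝ} (hp : p ∈ Omo) :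
    Real.exp (-4 * L) * EE P W p * (DD et V p * DD et V p + gr V p) * sin p.2.1 ≤ H p := by
  have hs := sin_pos_Omo hp
  refine le_trans ?_ (h.geH p hp)
  have h0 := add_nonneg (mul_self_nonneg (DD et V p)) (gr_nonneg V p)
  have h1 := mul_le_mul_of_nonneg_right (h.expW_ge2 hp) h0
  exact mul_le_mul_of_nonneg_right (by linarith [gr_nonneg P p]) hs.le

lemma H2 (h : Hyp P V W H G L A a) {p : ℝ × ℝ × ℝ} (hp : p ∈ Omo) :
    Real.exp (-4 * A) * DD eth V p ^ 2 * (sin p.2.1 ^ 3)⁻¹ ≤ H p := by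
  have hs := sin_pos_Omo hp
  refine le_trans ?_ (h.geH p hp)
  have h0 : DD eth V p ^ 2 ≤ DD et V p * DD et V p + gr V p := by
    have h2 : gr V p = DD eth V p ^ 2 + (sin p.2.1 ^ 2)⁻¹ * DD eph V p ^ 2 := by
      simp only [gr]; ring
    have : 0 ≤ (sin p.2.1 ^ 2)⁻¹ * DD eph V p ^ 2 := by positivity
    nlinarith [mul_self_nonneg (DD et V p)]
  have h1 : Real.exp (-4 * A) * (sin p.2.1 ^ 4)⁻¹ * DD eth V p ^ 2 ≤
      Real.exp (-4 * W p) * (DD et V p * DD et V p + gr V p) :=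
    mul_le_mul (h.expW_ge hp) h0 (sq_nonneg _) (Real.exp_pos _).le
  have h4 : Real.exp (-4 * A) * DD eth V p ^ 2 * (sin p.2.1 ^ 3)⁻¹ =
      Real.exp (-4 * A) * (sin p.2.1 ^ 4)⁻¹ * DD eth V p ^ 2 * sin p.2.1 := by
    field_simp
  rw [h4]
  exact mul_le_mul_of_nonneg_right (by linarith [gr_nonneg P p]) hs.le

lemma c1 {F : ℝ × ℝ × ℝ → ℝ} (hF : ContDiffOn ℝ (3 : ℕ) F Om) (e : ℝ × ℝ × ℝ) :
    ContDiffOn ℝ (2 : ℕ) (DD e F) Om := DD_contDiffOn (n := 2) e hF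

lemma c2 {F : ℝ × ℝ × ℝ → ℝ} (hF : ContDiffOn ℝ (3 : ℕ) F Om) (e f : ℝ × ℝ × ℝ) :
    ContDiffOn ℝ (1 : ℕ) (DD e (DD f F)) Om := DD_contDiffOn (n := 1) e (c1 hF f)

lemma c3 {F : ℝ × ℝ × ℝ → ℝ} (hF : ContDiffOn ℝ (3 : ℕ) F Om) (e f g : ℝ × ℝ × ℝ) :
    ContinuousOn (DD e (DD f (DD g F))) Om :=
  (DD_contDiffOn (n := 0) e (c2 hF f g)).continuousOn

lemma dif {F : ℝ × ℝ × ℝ → ℝ} {n : ℕ} (hF : ContDiffOn ℝ n F Om) (hn : n ≠ 0)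
    {p : ℝ × ℝ × ℝ} (hp : p ∈ Om) : DifferentiableWithinAt ℝ F Om p :=
  hF.differentiableOn (by exact_mod_cast hn) p hp

/-- decay in `θ`, for functions on the closed cylinder -/
lemma decayOm {F : ℝ × ℝ × ℝ → ℝ} (hF : ContDiffOn ℝ (1 : ℕ) F Om) {t φ C : ℝ} {k : ℕ}
    (ht : 0 < t) (hC : 0 ≤ C)
    (hb : ∀ θ ∈ Ioo 0 π, |DD eth F (t, θ, φ)| ≤ C * sin θ ^ k)
    (h0 : F (t, 0, φ) = 0) (h1 : F (t, π, φ) = 0) :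
    ∀ θ ∈ Ioo 0 π, |F (t, θ, φ)| ≤ 2 * C * sin θ ^ (k + 1) := by
  refine decay (f := fun θ => F (t, θ, φ)) (f' := fun θ => DD eth F (t, θ, φ)) hC ?_ ?_ hb h0 h1
  · exact hF.continuousOn.comp (f := fun θ => (t, θ, φ)) (by fun_prop)
      (fun θ hθ => mem_Om.2 ⟨ht, hθ⟩)
  · intro θ hθ
    have hp : (t, θ, φ) ∈ Omo := mem_Omo.2 ⟨ht, hθ⟩
    exact DD_th hp (dif hF one_ne_zero (Omo_sub hp))

lemma Pph (h : Hyp P V W H G L A a) {t θ₀ : ℝ} (ht : 0 < t) (hθ₀ : θ₀ = 0 ∨ θ₀ = π) :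
    ∀ φ ∈ Icc 0 (2 * π), DD eph P (t, θ₀, φ) = 0 := by
  refine pole_ext (c1 h.hP _).continuousOn ht hθ₀ fun φ hφ => ?_
  refine pole_core (c1 h.hP _).continuousOn ht hθ₀ hφ (h.hH t ht) ?_
  intro c δ hc hδ _ _ hb
  refine ⟨c ^ 2, δ, by positivity, hδ, fun s θ ψ hs hθ hθ' hψ => ?_⟩
  have hp : (s, θ, ψ) ∈ Omo := mem_Omo.2 ⟨by linarith [hs.1], hθ⟩
  refine le_trans ?_ (h.H1 hp)
  have h1 := hb s θ ψ hs (Ioo_subset_Icc_self hθ) hθ' hψ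
  have h2 : c ^ 2 ≤ DD eph P (s, θ, ψ) ^ 2 := by
    rw [← sq_abs (DD eph P (s, θ, ψ))]; exact pow_le_pow_left₀ hc.le h1 2
  exact mul_le_mul_of_nonneg_right h2 (inv_pos.2 (Real.sin_pos_of_mem_Ioo hθ)).le

lemma Pphph (h : Hyp P V W H G L A a) {t θ₀ : ℝ} (ht : 0 < t) (hθ₀ : θ₀ = 0 ∨ θ₀ = π) :
    ∀ φ ∈ Icc 0 (2 * π), DD eph (DD eph P) (t, θ₀, φ) = 0 := by
  intro φ hφ
  have hp : (t, θ₀, φ) ∈ Om := mem_Om.2 ⟨ht, pole_mem hθ₀⟩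
  have h1 := (DD_ph hp (dif (c1 h.hP eph) two_ne_zero hp)).hasDerivWithinAt (s := Icc 0 (2 * π))
  have h2 : HasDerivWithinAt (fun x => DD eph P (t, θ₀, x)) 0 (Icc 0 (2 * π)) φ :=
    (hasDerivWithinAt_const φ _ (0 : ℝ)).congr (fun x hx => h.Pph ht hθ₀ x hx)
      (h.Pph ht hθ₀ φ hφ)
  exact (uniqueDiffOn_Icc (by linarith [Real.pi_pos]) φ hφ).eq_deriv _ h1 h2

lemma Vth (h : Hyp P V W H G L A a) {t θ₀ : ℝ} (ht : 0 < t) (hθ₀ : θ₀ = 0 ∨ θ₀ = π) :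
    ∀ φ ∈ Icc 0 (2 * π), DD eth V (t, θ₀, φ) = 0 := by
  refine pole_ext (c1 h.hV _).continuousOn ht hθ₀ fun φ hφ => ?_
  refine pole_core (c1 h.hV _).continuousOn ht hθ₀ hφ (h.hH t ht) ?_
  intro c δ hc hδ _ _ hb
  refine ⟨Real.exp (-4 * A) * c ^ 2, δ, by positivity, hδ, fun s θ ψ hs hθ hθ' hψ => ?_⟩
  have hp : (s, θ, ψ) ∈ Omo := mem_Omo.2 ⟨by linarith [hs.1], hθ⟩
  refine le_trans ?_ (h.H2 hp)
  have h1 := hb s θ ψ hs (Ioo_subset_Icc_self hθ) hθ' hψ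
  have h2 : c ^ 2 ≤ DD eth V (s, θ, ψ) ^ 2 := by
    rw [← sq_abs (DD eth V (s, θ, ψ))]; exact pow_le_pow_left₀ hc.le h1 2
  have hs0 := Real.sin_pos_of_mem_Ioo hθ
  have hs1 := Real.sin_le_one θ
  have h3 : (sin θ)⁻¹ ≤ (sin θ ^ 3)⁻¹ := by
    apply inv_anti₀ (pow_pos hs0 3)
    nlinarith [mul_nonneg hs0.le hs0.le]
  exact mul_le_mul (mul_le_mul_of_nonneg_left h2 (Real.exp_pos _).le) h3
    (inv_pos.2 hs0).le (by positivity)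

lemma Vthth (h : Hyp P V W H G L A a) {t θ₀ : ℝ} (ht : 0 < t) (hθ₀ : θ₀ = 0 ∨ θ₀ = π) :
    ∀ φ ∈ Icc 0 (2 * π), DD eth (DD eth V) (t, θ₀, φ) = 0 := by
  refine pole_ext (c2 h.hV _ _).continuousOn ht hθ₀ fun φ hφ => ?_
  refine pole_core (c2 h.hV _ _).continuousOn ht hθ₀ hφ (h.hH t ht) ?_
  intro c δ hc hδ _ hδ2 hb
  refine ⟨Real.exp (-4 * A) * c ^ 2, δ, by positivity, hδ, fun s θ ψ hs hθ hθ' hψ => ?_⟩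
  have hs' : 0 < s := by linarith [hs.1]
  have hp : (s, θ, ψ) ∈ Omo := mem_Omo.2 ⟨hs', hθ⟩
  refine le_trans ?_ (h.H2 hp)
  have hs0 := Real.sin_pos_of_mem_Ioo hθ
  have hψ' : ψ ∈ Icc 0 (2 * π) := ⟨by linarith [hφ.1, hψ.1], by linarith [hψ.2]⟩
  have h0 := h.Vth hs' hθ₀ ψ hψ'
  have hcont : ContinuousOn (fun x => DD eth V (s, x, ψ)) (Icc 0 π) :=
    (c1 h.hV _).continuousOn.comp (f := fun x => (s, x, ψ)) (by fun_prop)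
      (fun θ hθ => mem_Om.2 ⟨hs', hθ⟩)
  have hder : ∀ x ∈ Ioo 0 π, HasDerivAt (fun x => DD eth V (s, x, ψ))
      (DD eth (DD eth V) (s, x, ψ)) x := fun x hx =>
    DD_th (mem_Omo.2 ⟨hs', hx⟩) (dif (c1 h.hV eth) two_ne_zero (Omo_sub (mem_Omo.2 ⟨hs', hx⟩)))
  have key : ∃ ξ ∈ Icc 0 π, |ξ - θ₀| < δ ∧
      |DD eth V (s, θ, ψ)| = |DD eth (DD eth V) (s, ξ, ψ)| * |θ - θ₀| := by
    rcases hθ₀ with h' | h'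
    · subst h'
      obtain ⟨ξ, hξ, he⟩ := exists_hasDerivAt_eq_slope _ _ hθ.1
        (hcont.mono (Icc_subset_Icc le_rfl hθ.2.le)) (fun x hx => hder x ⟨hx.1, hx.2.trans hθ.2⟩)
      refine ⟨ξ, ⟨hξ.1.le, (hξ.2.trans hθ.2).le⟩, ?_, ?_⟩
      · rw [sub_zero, abs_of_pos hξ.1]; rw [sub_zero, abs_of_pos hθ.1] at hθ'; linarith [hξ.2]
      · rw [← abs_mul, he, h0, sub_zero, div_mul_cancel₀]; rw [sub_zero]; exact hθ.1.ne'
    · subst h'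
      obtain ⟨ξ, hξ, he⟩ := exists_hasDerivAt_eq_slope _ _ hθ.2
        (hcont.mono (Icc_subset_Icc hθ.1.le le_rfl)) (fun x hx => hder x ⟨hθ.1.trans hx.1, hx.2⟩)
      refine ⟨ξ, ⟨(hθ.1.trans hξ.1).le, hξ.2.le⟩, ?_, ?_⟩
      · rw [abs_of_neg (by linarith [hξ.2])]; rw [abs_of_neg (by linarith [hθ.2])] at hθ'
        linarith [hξ.1]
      · rw [abs_sub_comm θ, ← abs_mul, he, h0, zero_sub, div_mul_cancel₀, abs_neg]
        exact (sub_pos.2 hθ.2).ne'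
  obtain ⟨ξ, hξ, hξ', he⟩ := key
  have h1 := hb s ξ ψ hs hξ hξ' hψ
  have h2 : (c * sin θ) ^ 2 ≤ DD eth V (s, θ, ψ) ^ 2 := by
    rw [← sq_abs (DD eth V (s, θ, ψ)), he]
    exact pow_le_pow_left₀ (by positivity) (mul_le_mul h1 (abs_sub_pole hθ₀ hθ) hs0.le
      (abs_nonneg _)) 2
  have h3 : Real.exp (-4 * A) * c ^ 2 * (sin θ)⁻¹
      = Real.exp (-4 * A) * (c * sin θ) ^ 2 * (sin θ ^ 3)⁻¹ := by field_simp
  rw [h3]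
  exact mul_le_mul_of_nonneg_right (mul_le_mul_of_nonneg_left h2 (Real.exp_pos _).le)
    (by positivity)

lemma Vt (h : Hyp P V W H G L A a) {t θ₀ φ : ℝ} (ht : 0 < t) (hθ₀ : θ₀ = 0 ∨ θ₀ = π) :
    DD et V (t, θ₀, φ) = 0 := by
  have hp : (t, θ₀, φ) ∈ Om := mem_Om.2 ⟨ht, pole_mem hθ₀⟩
  have h1 := DD_t hp (dif h.hV three_ne_zero hp)
  have h2 : ∃ c : ℝ, ∀ s, 0 < s → V (s, θ₀, φ) = c := by
    rcases hθ₀ with h' | h' <;> rw [h']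
    exacts [⟨a, fun s hs => h.trN s φ hs⟩, ⟨-a, fun s hs => h.trS s φ hs⟩]
  obtain ⟨c, hc⟩ := h2
  have h3 : HasDerivAt (fun x => V (x, θ₀, φ)) 0 t :=
    (hasDerivAt_const t c).congr_of_eventuallyEq (by
      filter_upwards [Ioi_mem_nhds ht] with s hs using hc s hs)
  exact h1.unique h3

lemma Vtth (h : Hyp P V W H G L A a) {t θ₀ φ : ℝ} (ht : 0 < t) (hθ₀ : θ₀ = 0 ∨ θ₀ = π)
    (hφ : φ ∈ Icc 0 (2 * π)) : DD eth (DD et V) (t, θ₀, φ) = 0 := by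
  have hp : (t, θ₀, φ) ∈ Om := mem_Om.2 ⟨ht, pole_mem hθ₀⟩
  rw [DD_symm hp (h.hV.of_le (by norm_num))]
  have h1 := DD_t hp (dif (c1 h.hV eth) two_ne_zero hp)
  have h3 : HasDerivAt (fun x => DD eth V (x, θ₀, φ)) 0 t :=
    (hasDerivAt_const t (0 : ℝ)).congr_of_eventuallyEq (by
      filter_upwards [Ioi_mem_nhds ht] with s hs using h.Vth hs hθ₀ φ hφ)
  exact h1.unique h3

end Hyp

namespace Hyp
variable {P V W H G : ℝ × ℝ × ℝ → ℝ} {L A a : ℝ}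

lemma basic_bounds (h : Hyp P V W H G L A a) {lo hi : ℝ} (hlo : 0 < lo) :
    ∃ C, 0 ≤ C ∧ ∀ t ∈ Icc lo hi, ∀ θ ∈ Ioo 0 π, ∀ φ ∈ Icc 0 (2 * π),
      (|DD et P (t, θ, φ)| ≤ C ∧ |DD et (DD et P) (t, θ, φ)| ≤ C ∧
        |DD eth P (t, θ, φ)| ≤ C ∧ |DD eth (DD eth P) (t, θ, φ)| ≤ C) ∧
      (|DD eph P (t, θ, φ)| ≤ C * sin θ ∧ |DD eph (DD eph P) (t, θ, φ)| ≤ C * sin θ) ∧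
      (|DD eth V (t, θ, φ)| ≤ C * sin θ ^ 2 ∧ |DD et V (t, θ, φ)| ≤ C * sin θ ^ 2) := by
  obtain ⟨C1, p1, h1⟩ := bdd_of_cont (b := hi) (c1 h.hP et).continuousOn hlo
  obtain ⟨C2, p2, h2⟩ := bdd_of_cont (b := hi) (c2 h.hP et et).continuousOn hlo
  obtain ⟨C3, p3, h3⟩ := bdd_of_cont (b := hi) (c1 h.hP eth).continuousOn hlo
  obtain ⟨C4, p4, h4⟩ := bdd_of_cont (b := hi) (c2 h.hP eth eth).continuousOn hlo
  obtain ⟨C5, p5, h5⟩ := bdd_of_cont (b := hi) (c2 h.hP eth eph).continuousOn hlo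
  obtain ⟨C6, p6, h6⟩ := bdd_of_cont (b := hi) (c3 h.hP eth eph eph) hlo
  obtain ⟨C7, p7, h7⟩ := bdd_of_cont (b := hi) (c3 h.hV eth eth eth) hlo
  obtain ⟨C8, p8, h8⟩ := bdd_of_cont (b := hi) (c3 h.hV eth eth et) hlo
  refine ⟨C1 + C2 + C3 + C4 + 2 * C5 + 2 * C6 + 4 * C7 + 4 * C8, by positivity, ?_⟩
  intro t ht θ hθ φ hφ
  have ht0 : 0 < t := lt_of_lt_of_le hlo ht.1
  have hs := Real.sin_pos_of_mem_Ioo hθ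
  have hθ' := Ioo_subset_Icc_self hθ
  have h0 : (0 : ℝ) = 0 ∨ (0 : ℝ) = π := Or.inl rfl
  have hp : π = 0 ∨ π = π := Or.inr rfl
  have b5 : |DD eph P (t, θ, φ)| ≤ 2 * C5 * sin θ ^ (0 + 1) :=
    decayOm ((c1 h.hP eph).of_le (by norm_num)) ht0 p5
      (fun x hx => by simpa using h5 t ht x (Ioo_subset_Icc_self hx) φ hφ)
      (h.Pph ht0 h0 φ hφ) (h.Pph ht0 hp φ hφ) θ hθ
  have b6 : |DD eph (DD eph P) (t, θ, φ)| ≤ 2 * C6 * sin θ ^ (0 + 1) :=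
    decayOm (c2 h.hP eph eph) ht0 p6
      (fun x hx => by simpa using h6 t ht x (Ioo_subset_Icc_self hx) φ hφ)
      (h.Pphph ht0 h0 φ hφ) (h.Pphph ht0 hp φ hφ) θ hθ
  have b7 : |DD eth V (t, θ, φ)| ≤ 2 * (2 * C7) * sin θ ^ (1 + 1) :=
    decayOm ((c1 h.hV eth).of_le (by norm_num)) ht0 (by positivity)
      (fun x hx => decayOm (k := 0) (c2 h.hV eth eth) ht0 p7
        (fun x hx => by simpa using h7 t ht x (Ioo_subset_Icc_self hx) φ hφ)
        (h.Vthth ht0 h0 φ hφ) (h.Vthth ht0 hp φ hφ) x hx)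
      (h.Vth ht0 h0 φ hφ) (h.Vth ht0 hp φ hφ) θ hθ
  have b8 : |DD et V (t, θ, φ)| ≤ 2 * (2 * C8) * sin θ ^ (1 + 1) :=
    decayOm ((c1 h.hV et).of_le (by norm_num)) ht0 (by positivity)
      (fun x hx => decayOm (k := 0) (c2 h.hV eth et) ht0 p8
        (fun x hx => by simpa using h8 t ht x (Ioo_subset_Icc_self hx) φ hφ)
        (h.Vtth ht0 h0 hφ) (h.Vtth ht0 hp hφ) x hx)
      (h.Vt ht0 h0) (h.Vt ht0 hp) θ hθ
  rw [zero_add, pow_one] at b5 b6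
  have q2 : 0 ≤ sin θ ^ 2 := by positivity
  refine ⟨⟨(h1 t ht θ hθ' φ hφ).trans (by linarith), (h2 t ht θ hθ' φ hφ).trans (by linarith),
    (h3 t ht θ hθ' φ hφ).trans (by linarith), (h4 t ht θ hθ' φ hφ).trans (by linarith)⟩,
    ⟨b5.trans ?_, b6.trans ?_⟩, b7.trans ?_, b8.trans ?_⟩
  · exact mul_le_mul_of_nonneg_right (by linarith) hs.le
  · exact mul_le_mul_of_nonneg_right (by linarith) hs.le
  · exact mul_le_mul_of_nonneg_right (by linarith) q2
  · exact mul_le_mul_of_nonneg_right (by linarith) q2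

/-- consequence of the equation for `Φ` -/
lemma source_bound (h : Hyp P V W H G L A a) {t θ φ C : ℝ} (ht : 0 < t) (hθ : θ ∈ Ioo 0 π)
    (hC : 0 ≤ C)
    (h1 : |DD et P (t, θ, φ)| ≤ C) (h2 : |DD et (DD et P) (t, θ, φ)| ≤ C)
    (h3 : |DD eth P (t, θ, φ)| ≤ C) (h4 : |DD eth (DD eth P) (t, θ, φ)| ≤ C)
    (h5 : |DD eph (DD eph P) (t, θ, φ)| ≤ C * sin θ) :
    |2 * EE P W (t, θ, φ) * (DD et V (t, θ, φ) * DD et V (t, θ, φ) + gr V (t, θ, φ)) * sin θ ^ 2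
      + DD eph (DD eph W) (t, θ, φ)| ≤ (5 * C + 3 * A) * sin θ := by
  have hp : (t, θ, φ) ∈ Omo := mem_Omo.2 ⟨ht, hθ⟩
  have hs := Real.sin_pos_of_mem_Ioo hθ
  have hs1 := Real.sin_le_one θ
  have hc1 := Real.abs_cos_le_one θ
  have hX := h.bL _ hp
  have heq := h.eqP _ hp
  simp only [lapD] at hX heq
  generalize EE P W (t, θ, φ) * (DD et V (t, θ, φ) * DD et V (t, θ, φ) + gr V (t, θ, φ)) = D at *
  generalize DD et P (t, θ, φ) = x1 at *
  generalize DD et (DD et P) (t, θ, φ) = x2 at *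
  generalize DD eth P (t, θ, φ) = x3 at *
  generalize DD eth (DD eth P) (t, θ, φ) = x4 at *
  generalize DD eph (DD eph P) (t, θ, φ) = x5 at *
  generalize DD eph (DD eph W) (t, θ, φ) = y at *
  generalize DD eth (DD eth W) (t, θ, φ) = y1 at *
  generalize DD eth W (t, θ, φ) = y2 at *
  set X := (y1 + cos θ / sin θ * y2 + (sin θ ^ 2)⁻¹ * y - (sin θ ^ 2)⁻¹ * y) * sin θ with hXd
  have key : ∀ Z : ℝ, x2 - x1 + (x4 + cos θ / sin θ * x3 + (sin θ ^ 2)⁻¹ * x5) =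
      Z + (y1 + cos θ / sin θ * y2 + (sin θ ^ 2)⁻¹ * y) → Z * sin θ ^ 2 + y =
      sin θ ^ 2 * (x2 - x1 + x4) + sin θ * (cos θ * x3) + x5 - sin θ * X := by
    intro Z hZ
    have : Z = x2 - x1 + (x4 + cos θ / sin θ * x3 + (sin θ ^ 2)⁻¹ * x5) -
      (y1 + cos θ / sin θ * y2 + (sin θ ^ 2)⁻¹ * y) := by linarith
    rw [this, hXd]
    field_simp
    ring
  rw [key _ heq]
  have e1 : |sin θ ^ 2 * (x2 - x1 + x4)| ≤ 3 * C * sin θ := by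
    rw [abs_mul, abs_of_pos (pow_pos hs 2)]
    have : |x2 - x1 + x4| ≤ 3 * C := by
      have := abs_add_le (x2 - x1) x4
      have := abs_sub x2 x1
      linarith
    nlinarith [mul_le_mul_of_nonneg_left this (pow_pos hs 2).le, mul_nonneg hC hs.le]
  have e2 : |sin θ * (cos θ * x3)| ≤ C * sin θ := by
    rw [abs_mul, abs_mul, abs_of_pos hs]
    have : |cos θ| * |x3| ≤ 1 * C := mul_le_mul hc1 h3 (abs_nonneg _) zero_le_one
    nlinarith
  have e3 : |sin θ * X| ≤ 3 * A * sin θ := by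
    rw [abs_mul, abs_of_pos hs]; nlinarith
  have t1 := abs_sub (sin θ ^ 2 * (x2 - x1 + x4) + sin θ * (cos θ * x3) + x5) (sin θ * X)
  have t2 := abs_add_three (sin θ ^ 2 * (x2 - x1 + x4)) (sin θ * (cos θ * x3)) x5
  linarith

lemma src_nonneg (P V W : ℝ × ℝ × ℝ → ℝ) (p : ℝ × ℝ × ℝ) :
    0 ≤ 2 * EE P W p * (DD et V p * DD et V p + gr V p) :=
  mul_nonneg (by have := Real.exp_pos (4 * (P p - W p)); simp only [EE]; linarith)
    (add_nonneg (mul_self_nonneg _) (gr_nonneg _ _))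

lemma Gpole (h : Hyp P V W H G L A a) {t θ₀ : ℝ} (ht : 0 < t) (hθ₀ : θ₀ = 0 ∨ θ₀ = π) :
    ∀ φ ∈ Icc 0 (2 * π), G (t, θ₀, φ) = 0 := by
  refine pole_ext h.hG ht hθ₀ fun φ hφ => ?_
  refine pole_core h.hG ht hθ₀ hφ (h.hH t ht) ?_
  intro c δ hc hδ hδ1 hδ2 hb
  obtain ⟨C, hC, hB⟩ := h.basic_bounds (lo := t) (hi := t + 1) ht
  have hA := h.A0
  set K := 5 * C + 3 * A with hK
  have hK0 : 0 ≤ K := by positivity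
  refine ⟨Real.exp (-4 * L) * (c / 4), min δ (c / (2 * (K + 1))), by positivity,
    lt_min hδ (by positivity), fun s θ ψ hs hθ hθ' hψ => ?_⟩
  have m1 : min δ (c / (2 * (K + 1))) ≤ δ := min_le_left _ _
  have m2 : min δ (c / (2 * (K + 1))) ≤ c / (2 * (K + 1)) := min_le_right _ _
  have hs' : s ∈ Icc t (t + 1) := ⟨hs.1.le, by linarith [hs.2]⟩
  have hs0 : 0 < s := by linarith [hs.1]
  have hψ' : ψ ∈ Icc 0 (2 * π) := ⟨by linarith [hφ.1, hψ.1], by linarith [hψ.2]⟩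
  have hp : (s, θ, ψ) ∈ Omo := mem_Omo.2 ⟨hs0, hθ⟩
  obtain ⟨⟨b1, b2, b3, b4⟩, ⟨_, b5⟩, _⟩ := hB s hs' θ hθ ψ hψ'
  have hsrc := h.source_bound hs0 hθ hC b1 b2 b3 b4 b5
  have hg := hb s θ ψ ⟨hs.1, by linarith [hs.2]⟩ (Ioo_subset_Icc_self hθ) (by linarith)
    ⟨hψ.1, by linarith [hψ.2]⟩
  rw [h.eG _ hp] at hg
  refine le_trans ?_ (h.H3 hp)
  have hn := src_nonneg P V W (s, θ, ψ)
  have hsp := Real.sin_pos_of_mem_Ioo hθ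
  have hsd : sin θ ≤ c / (2 * (K + 1)) := by linarith [abs_sub_pole hθ₀ hθ]
  have hKs : K * sin θ ≤ c / 2 := by
    have h1 : K * sin θ ≤ (K + 1) * (c / (2 * (K + 1))) :=
      mul_le_mul (by linarith) hsd hsp.le (by linarith)
    have h2 : (K + 1) * (c / (2 * (K + 1))) = c / 2 := by field_simp
    linarith
  set D := 2 * EE P W (s, θ, ψ) * (DD et V (s, θ, ψ) * DD et V (s, θ, ψ) + gr V (s, θ, ψ)) with hD
  have hDs : c / 2 ≤ D * sin θ ^ 2 := by
    have h0 : 0 ≤ D * sin θ ^ 2 := by positivity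
    rw [← abs_of_nonneg h0]
    have := abs_sub (D * sin θ ^ 2 + DD eph (DD eph W) (s, θ, ψ)) (D * sin θ ^ 2)
    rw [add_sub_cancel_left] at this
    linarith
  have e1 : Real.exp (-4 * L) * EE P W (s, θ, ψ) *
      (DD et V (s, θ, ψ) * DD et V (s, θ, ψ) + gr V (s, θ, ψ)) * sin θ
      = Real.exp (-4 * L) * (D * sin θ ^ 2 / 2) * (sin θ)⁻¹ := by
    rw [hD]; field_simp
  rw [show sin (s, θ, ψ).2.1 = sin θ from rfl, e1]
  exact mul_le_mul_of_nonneg_right (mul_le_mul_of_nonneg_left (by linarith) (Real.exp_pos _).le)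
    (inv_pos.2 hsp).le

lemma Wphph (h : Hyp P V W H G L A a) {t θ φ : ℝ} (ht : 0 < t) (hθ : θ ∈ Ioo 0 π)
    (hφ : φ ∈ Icc 0 (2 * π)) : |DD eph (DD eph W) (t, θ, φ)| ≤ 2 * A * sin θ := by
  rw [← h.eG _ (mem_Omo.2 ⟨ht, hθ⟩)]
  have := decay (f := fun x => G (t, x, φ)) (f' := fun x => DD eth (DD eph (DD eph W)) (t, x, φ))
    (k := 0) h.A0 (h.hG.comp (f := fun x => (t, x, φ)) (by fun_prop)
      (fun x hx => mem_Om.2 ⟨ht, hx⟩)) (fun x hx => by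
        have h1 := o_th (D2_cd h.hW eph eph) (mem_Omo.2 ⟨ht, hx⟩ : (t, x, φ) ∈ Omo)
        refine h1.congr_of_eventuallyEq ?_
        filter_upwards [Ioo_mem_nhds hx.1 hx.2] with y hy
        exact h.eG _ (mem_Omo.2 ⟨ht, hy⟩))
    (fun x hx => by simpa using h.bG (t, x, φ) (mem_Omo.2 ⟨ht, hx⟩))
    (h.Gpole ht (Or.inl rfl) φ hφ) (h.Gpole ht (Or.inr rfl) φ hφ) θ hθ
  simpa using this

set_option maxHeartbeats 1600000 in
lemma final_bounds (h : Hyp P V W H G L A a) (lo hi : ℝ) (hlo : 0 < lo) :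
    ∃ C, 0 ≤ C ∧ ∀ t ∈ Icc lo hi, ∀ θ ∈ Ioo 0 π, ∀ φ ∈ Icc 0 (2 * π),
      |kk P V W (t, θ, φ) * sin θ| ≤ C ∧ |gE P V W (t, θ, φ) * sin θ| ≤ C ∧
        |bb P V W (t, θ, φ)| ≤ C * sin θ := by
  obtain ⟨C, hC, hB⟩ := h.basic_bounds (lo := lo) (hi := hi) hlo
  have hA := h.A0
  set M := Real.exp (4 * L + 4 * A) with hM
  have hM0 : 0 < M := Real.exp_pos _
  refine ⟨2 * C ^ 2 + (5 * C + 5 * A) + 10 * A * |L| + M * C ^ 2, by positivity, ?_⟩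
  intro t ht θ hθ φ hφ
  have ht0 : 0 < t := lt_of_lt_of_le hlo ht.1
  have hp : (t, θ, φ) ∈ Omo := mem_Omo.2 ⟨ht0, hθ⟩
  obtain ⟨⟨b1, b2, b3, b4⟩, ⟨b6, b5⟩, b7, b8⟩ := hB t ht θ hθ φ hφ
  have hsrc := h.source_bound ht0 hθ hC b1 b2 b3 b4 b5
  have hW2 := h.Wphph ht0 hθ hφ
  have hs := Real.sin_pos_of_mem_Ioo hθ
  have hs1 := Real.sin_le_one θ
  have hE := h.EE_le hp
  have hE0 : 0 < EE P W (t, θ, φ) := Real.exp_pos _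
  have hX := h.bL _ hp
  have hPb := h.bP _ (Omo_sub hp)
  have hg0 := gr_nonneg V (t, θ, φ)
  have hLn : |P (t, θ, φ)| ≤ |L| := hPb.trans (le_abs_self _)
  have hDs : 2 * EE P W (t, θ, φ) * (DD et V (t, θ, φ) * DD et V (t, θ, φ) + gr V (t, θ, φ))
      * sin θ ≤ 5 * C + 5 * A := by
    have h1 := (abs_le.1 hsrc).2
    have h2 := (abs_le.1 hW2).1
    have h3 : (2 * EE P W (t, θ, φ) * (DD et V (t, θ, φ) * DD et V (t, θ, φ) + gr V (t, θ, φ))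
      * sin θ) * sin θ ≤ (5 * C + 5 * A) * sin θ := by nlinarith
    exact le_of_mul_le_mul_right h3 hs
  have hv0 : 0 ≤ EE P W (t, θ, φ) * (DD et V (t, θ, φ) * DD et V (t, θ, φ)) * sin θ :=
    mul_nonneg (mul_nonneg hE0.le (mul_self_nonneg _)) hs.le
  have hv1 : 0 ≤ EE P W (t, θ, φ) * gr V (t, θ, φ) * sin θ :=
    mul_nonneg (mul_nonneg hE0.le hg0) hs.le
  have sqb : ∀ x : ℝ, |x| ≤ C → x ^ 2 ≤ C ^ 2 := fun x hx => by
    rw [← sq_abs]; exact pow_le_pow_left₀ (abs_nonneg _) hx 2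
  have hAL : 0 ≤ 10 * A * |L| := by positivity
  have hMC : 0 ≤ M * C ^ 2 := by positivity
  refine ⟨?_, ?_, ?_⟩
  · have e : kk P V W (t, θ, φ) * sin θ = DD et P (t, θ, φ) ^ 2 * sin θ +
      EE P W (t, θ, φ) * (DD et V (t, θ, φ) * DD et V (t, θ, φ)) * sin θ := by
      simp only [kk]; ring
    have h1 : DD et P (t, θ, φ) ^ 2 * sin θ ≤ C ^ 2 := by
      nlinarith [sqb _ b1, sq_nonneg (DD et P (t, θ, φ))]
    have h2 : 0 ≤ DD et P (t, θ, φ) ^ 2 * sin θ := by positivity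
    rw [e, abs_of_nonneg (by linarith)]
    nlinarith
  · have e : gE P V W (t, θ, φ) * sin θ = DD eth P (t, θ, φ) ^ 2 * sin θ
        + DD eph P (t, θ, φ) ^ 2 * (sin θ)⁻¹ + EE P W (t, θ, φ) * gr V (t, θ, φ) * sin θ
        + 2 * (lapD W (t, θ, φ) * sin θ) * P (t, θ, φ) := by
      simp only [gE, gr]; field_simp
    have h1 : DD eth P (t, θ, φ) ^ 2 * sin θ ≤ C ^ 2 := by
      nlinarith [sqb _ b3, sq_nonneg (DD eth P (t, θ, φ))]
    have h2 : 0 ≤ DD eth P (t, θ, φ) ^ 2 * sin θ := by positivity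
    have h3 : DD eph P (t, θ, φ) ^ 2 * (sin θ)⁻¹ ≤ C ^ 2 := by
      rw [← div_eq_mul_inv, div_le_iff₀ hs, ← sq_abs]
      have := pow_le_pow_left₀ (abs_nonneg _) b6 2
      have : C ^ 2 * (sin θ * sin θ) ≤ C ^ 2 * (1 * sin θ) := by gcongr
      nlinarith
    have h4 : 0 ≤ DD eph P (t, θ, φ) ^ 2 * (sin θ)⁻¹ := by positivity
    have h5 : |lapD W (t, θ, φ) * sin θ| ≤ 5 * A := by
      have e2 : lapD W (t, θ, φ) * sin θ = (lapD W (t, θ, φ) - (sin θ ^ 2)⁻¹ *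
          DD eph (DD eph W) (t, θ, φ)) * sin θ + DD eph (DD eph W) (t, θ, φ) * (sin θ)⁻¹ := by
        field_simp; ring
      have h6 : |DD eph (DD eph W) (t, θ, φ) * (sin θ)⁻¹| ≤ 2 * A := by
        rw [abs_mul, abs_of_pos (inv_pos.2 hs), ← div_eq_mul_inv, div_le_iff₀ hs]
        exact hW2
      rw [e2]
      refine (abs_add_le _ _).trans ?_
      have : |(lapD W (t, θ, φ) - (sin θ ^ 2)⁻¹ *
          DD eph (DD eph W) (t, θ, φ)) * sin θ| ≤ 3 * A := hX
      linarith
    have h7 : |2 * (lapD W (t, θ, φ) * sin θ) * P (t, θ, φ)| ≤ 10 * A * |L| := by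
      rw [abs_mul, abs_mul, abs_two]
      have := mul_le_mul h5 hLn (abs_nonneg _) (by positivity)
      linarith
    have h8 : EE P W (t, θ, φ) * gr V (t, θ, φ) * sin θ ≤ 5 * C + 5 * A := by nlinarith
    rw [e, abs_le]
    have h9 := abs_le.1 h7
    constructor <;> linarith [h9.1, h9.2]
  · have e : |bb P V W (t, θ, φ)| = |DD et P (t, θ, φ) * DD eth P (t, θ, φ)
        + EE P W (t, θ, φ) * (DD et V (t, θ, φ) * DD eth V (t, θ, φ))| * sin θ := by
      simp only [bb]
      rw [abs_neg, abs_mul, abs_of_pos hs, mul_comm]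
    rw [e]
    refine mul_le_mul_of_nonneg_right ?_ hs.le
    refine (abs_add_le _ _).trans ?_
    have h1 : |DD et P (t, θ, φ) * DD eth P (t, θ, φ)| ≤ C ^ 2 := by
      rw [abs_mul, sq]; exact mul_le_mul b1 b3 (abs_nonneg _) hC
    have h2 : |EE P W (t, θ, φ) * (DD et V (t, θ, φ) * DD eth V (t, θ, φ))| ≤ M * C ^ 2 := by
      rw [abs_mul, abs_mul, abs_of_pos hE0]
      have h3 : |DD et V (t, θ, φ)| * |DD eth V (t, θ, φ)| ≤ (C * sin θ ^ 2) * (C * sin θ ^ 2) :=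
        mul_le_mul b8 b7 (abs_nonneg _) (by positivity)
      have h4 := mul_le_mul hE h3 (by positivity) (by positivity)
      refine h4.trans (le_of_eq ?_)
      rw [show sin (t, θ, φ).2.1 = sin θ from rfl, ← hM]
      field_simp
    have : 0 ≤ C ^ 2 := by positivity
    linarith

end Hyp

/-! ### Translation between coordinate derivatives and `DD` -/

/-- `K` represents the curried function `F` on the open cylinder -/
structure CylRep (F : ℝ → ℝ → ℝ → ℝ) (K : ℝ × ℝ × ℝ → ℝ) (n : ℕ) : Prop where
  cd : ContDiffOn ℝ n K Omo
  eq : ∀ t θ φ : ℝ, 0 < t → θ ∈ Ioo 0 π → F t θ φ = K (t, θ, φ)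

namespace CylRep
variable {F : ℝ → ℝ → ℝ → ℝ} {K : ℝ × ℝ × ℝ → ℝ} {n : ℕ}

lemma c1 (h : CylRep F K (n + 1)) : ContDiffOn ℝ (1 : ℕ) K Omo :=
  h.cd.of_le (by exact_mod_cast Nat.le_add_left 1 n)

lemma dt (h : CylRep F K (n + 1)) : CylRep (cdt F) (DD et K) n := by
  refine ⟨DD_contDiffOn_o et h.cd, fun t θ φ ht hθ => ?_⟩
  have h1 := o_t h.c1 (mem_Omo.2 ⟨ht, hθ⟩ : (t, θ, φ) ∈ Omo)
  have h2 : HasDerivAt (fun x => F x θ φ) (DD et K (t, θ, φ)) t :=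
    h1.congr_of_eventuallyEq (by
      filter_upwards [Ioi_mem_nhds ht] with s hs using h.eq s θ φ hs hθ)
  exact h2.deriv

lemma dth (h : CylRep F K (n + 1)) : CylRep (cdθ F) (DD eth K) n := by
  refine ⟨DD_contDiffOn_o eth h.cd, fun t θ φ ht hθ => ?_⟩
  have h1 := o_th h.c1 (mem_Omo.2 ⟨ht, hθ⟩ : (t, θ, φ) ∈ Omo)
  have h2 : HasDerivAt (fun x => F t x φ) (DD eth K (t, θ, φ)) θ :=
    h1.congr_of_eventuallyEq (by
      filter_upwards [Ioo_mem_nhds hθ.1 hθ.2] with s hs using h.eq t s φ ht hs)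
  exact h2.deriv

lemma dph (h : CylRep F K (n + 1)) : CylRep (cdφ F) (DD eph K) n := by
  refine ⟨DD_contDiffOn_o eph h.cd, fun t θ φ ht hθ => ?_⟩
  have h1 := o_ph h.c1 (mem_Omo.2 ⟨ht, hθ⟩ : (t, θ, φ) ∈ Omo)
  have h2 : HasDerivAt (fun x => F t θ x) (DD eph K (t, θ, φ)) φ :=
    h1.congr_of_eventuallyEq (Eventually.of_forall fun s => h.eq t θ s ht hθ)
  exact h2.deriv

lemma lap (h : CylRep F K (n + 2)) {t θ φ : ℝ} (ht : 0 < t) (hθ : θ ∈ Ioo 0 π) :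
    lapS2 (F t) θ φ = lapD K (t, θ, φ) := by
  have h1 := h.dth.dth.eq t θ φ ht hθ
  have h2 := h.dth.eq t θ φ ht hθ
  have h3 := h.dph.dph.eq t θ φ ht hθ
  simp only [lapS2, lapD]
  rw [← h1, ← h2, ← h3]
  rfl

lemma grad (h : CylRep F K (n + 1)) {t θ φ : ℝ} (ht : 0 < t) (hθ : θ ∈ Ioo 0 π) :
    gradNormSqS2 (F t) θ φ = gr K (t, θ, φ) := by
  have h2 := h.dth.eq t θ φ ht hθ
  have h3 := h.dph.eq t θ φ ht hθ
  simp only [gradNormSqS2, gradDotS2, gr]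
  rw [← h2, ← h3]
  rfl

end CylRep

lemma cdt_per {F : ℝ → ℝ → ℝ → ℝ} (h : ∀ t θ φ : ℝ, F t θ (φ + 2 * π) = F t θ φ) (t θ φ : ℝ) :
    cdt F t θ (φ + 2 * π) = cdt F t θ φ := by
  simp only [cdt, h]

lemma cdφ_per {F : ℝ → ℝ → ℝ → ℝ} (h : ∀ t θ φ : ℝ, F t θ (φ + 2 * π) = F t θ φ) (t θ φ : ℝ) :
    cdφ F t θ (φ + 2 * π) = cdφ F t θ φ := by
  simp only [cdφ, pdφ]
  rw [← deriv_comp_add_const]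
  simp only [h]

section final
variable {A₁ Λ a : ℝ} {Rω : Renormalizer (Ioi 0) A₁}

/-- `ln ω` as a curried function -/
def lw (Rω : Renormalizer (Ioi 0) A₁) : ℝ → ℝ → ℝ → ℝ := fun t θ φ => Real.log (Rω.ω t θ φ)

lemma rep_w (Rω : Renormalizer (Ioi 0) A₁) : CylRep (lw Rω) (unc (lw Rω)) 3 := by
  refine ⟨?_, fun _ _ _ _ _ => rfl⟩
  have h := Rω.smooth.log (fun p hp => (Rω.pos p.1 hp.1 p.2.1 hp.2.1 p.2.2).ne')
  exact contDiffOn_infty.1 h 3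

lemma rep_P (S : RHMSolution (Ioi 0) A₁ Rω Λ a) : CylRep S.Φ (unc S.Φ) 3 :=
  ⟨ContDiffOn.mono (by exact_mod_cast S.regΦ) Omo_sub, fun _ _ _ _ _ => rfl⟩

lemma rep_V (S : RHMSolution (Ioi 0) A₁ Rω Λ a) : CylRep S.v (unc S.v) 3 :=
  ⟨ContDiffOn.mono (by exact_mod_cast S.regv) Omo_sub, fun _ _ _ _ _ => rfl⟩

lemma cdt_lw (hωt : ∀ t t' θ φ : ℝ, Rω.ω t θ φ = Rω.ω t' θ φ) :
    cdt (lw Rω) = fun _ _ _ => 0 := by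
  funext t θ φ
  have : (fun s => lw Rω s θ φ) = fun _ => lw Rω 0 θ φ := by
    funext s; simp only [lw]; rw [hωt s 0]
  simp only [cdt, this, deriv_const]

lemma cL_lw (hωt : ∀ t t' θ φ : ℝ, Rω.ω t θ φ = Rω.ω t' θ φ) {t θ φ : ℝ} (ht : 0 < t)
    (hθ : θ ∈ Ioo 0 π) : cL (lw Rω) t θ φ = lapD (unc (lw Rω)) (t, θ, φ) := by
  simp only [cL]
  rw [cdt_lw hωt, (rep_w Rω).lap ht hθ]
  simp [cdt]

lemma DDt_lw (hωt : ∀ t t' θ φ : ℝ, Rω.ω t θ φ = Rω.ω t' θ φ) {t θ φ : ℝ} (ht : 0 < t)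
    (hθ : θ ∈ Ioo 0 π) : DD et (unc (lw Rω)) (t, θ, φ) = 0 := by
  rw [← (rep_w Rω).dt.eq t θ φ ht hθ, cdt_lw hωt]

lemma cgr_eq {F : ℝ → ℝ → ℝ → ℝ} {K : ℝ × ℝ × ℝ → ℝ} {n : ℕ} (h : CylRep F K (n + 1)) {t θ φ : ℝ}
    (ht : 0 < t) (hθ : θ ∈ Ioo 0 π) :
    cgradNormSq F t θ φ = DD et K (t, θ, φ) * DD et K (t, θ, φ) + gr K (t, θ, φ) := by
  rw [← h.grad ht hθ, ← h.dt.eq t θ φ ht hθ]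
  rfl

lemma the_eqP (S : RHMSolution (Ioi 0) A₁ Rω Λ a)
    (hωt : ∀ t t' θ φ : ℝ, Rω.ω t θ φ = Rω.ω t' θ φ) :
    ∀ p ∈ Omo, DD et (DD et (unc S.Φ)) p - DD et (unc S.Φ) p + lapD (unc S.Φ) p
      = 2 * EE (unc S.Φ) (unc (lw Rω)) p * (DD et (unc S.v) p * DD et (unc S.v) p + gr (unc S.v) p)
        + lapD (unc (lw Rω)) p := by
  rintro ⟨t, θ, φ⟩ hp
  obtain ⟨ht, hθ⟩ := mem_Omo.1 hp
  have h := S.eqΦ t ht θ hθ φ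
  rw [cgr_eq (rep_V S) ht hθ] at h
  have h2 := cL_lw hωt ht hθ (φ := φ)
  rw [← h2, ← (rep_P S).dt.dt.eq t θ φ ht hθ, ← (rep_P S).dt.eq t θ φ ht hθ,
    ← (rep_P S).lap ht hθ]
  exact h

lemma the_eqV (S : RHMSolution (Ioi 0) A₁ Rω Λ a)
    (hωt : ∀ t t' θ φ : ℝ, Rω.ω t θ φ = Rω.ω t' θ φ) :
    ∀ p ∈ Omo, DD et (DD et (unc S.v)) p - DD et (unc S.v) p + lapD (unc S.v) p
      = -4 * (DD et (unc S.Φ) p * DD et (unc S.v) p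
        + ((DD eth (unc S.Φ) p - DD eth (unc (lw Rω)) p) * DD eth (unc S.v) p
        + (sin p.2.1 ^ 2)⁻¹ * (DD eph (unc S.Φ) p - DD eph (unc (lw Rω)) p)
          * DD eph (unc S.v) p)) := by
  rintro ⟨t, θ, φ⟩ hp
  obtain ⟨ht, hθ⟩ := mem_Omo.1 hp
  have h := S.eqv t ht θ hθ φ
  have r : CylRep (fun t θ φ => S.Φ t θ φ - Real.log (Rω.ω t θ φ))
    (fun p => unc S.Φ p - unc (lw Rω) p) 3 :=
    ⟨(rep_P S).cd.sub (rep_w Rω).cd, fun _ _ _ _ _ => rfl⟩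
  have e1 : DD et (fun p => unc S.Φ p - unc (lw Rω) p) (t, θ, φ) = DD et (unc S.Φ) (t, θ, φ) := by
    have := (o_t r.c1 hp).unique ((o_t (rep_P S).c1 hp).sub (o_t (rep_w Rω).c1 hp))
    rw [this, DDt_lw hωt ht hθ, sub_zero]
  have e2 : DD eth (fun p => unc S.Φ p - unc (lw Rω) p) (t, θ, φ)
      = DD eth (unc S.Φ) (t, θ, φ) - DD eth (unc (lw Rω)) (t, θ, φ) :=
    (o_th r.c1 hp).unique ((o_th (rep_P S).c1 hp).sub (o_th (rep_w Rω).c1 hp))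
  have e3 : DD eph (fun p => unc S.Φ p - unc (lw Rω) p) (t, θ, φ)
      = DD eph (unc S.Φ) (t, θ, φ) - DD eph (unc (lw Rω)) (t, θ, φ) :=
    (o_ph r.c1 hp).unique ((o_ph (rep_P S).c1 hp).sub (o_ph (rep_w Rω).c1 hp))
  rw [← e1, ← e2, ← e3, ← r.dt.eq t θ φ ht hθ, ← r.dth.eq t θ φ ht hθ, ← r.dph.eq t θ φ ht hθ,
    ← (rep_V S).dt.dt.eq t θ φ ht hθ, ← (rep_V S).dt.eq t θ φ ht hθ,
    ← (rep_V S).dth.eq t θ φ ht hθ, ← (rep_V S).dph.eq t θ φ ht hθ,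
    ← (rep_V S).lap ht hθ]
  exact h

lemma the_per (S : RHMSolution (Ioi 0) A₁ Rω Λ a) (t θ : ℝ) (ht : 0 < t) (hθ : θ ∈ Ioo 0 π) :
    cc (unc S.Φ) (unc S.v) (unc (lw Rω)) (t, θ, 2 * π)
      = cc (unc S.Φ) (unc S.v) (unc (lw Rω)) (t, θ, 0) := by
  have z : ∀ x : ℝ, x = 2 * π → x = 0 + 2 * π := fun x hx => by rw [hx, zero_add]
  simp only [cc, EE]
  rw [← (rep_P S).dt.eq t θ _ ht hθ, ← (rep_V S).dt.eq t θ _ ht hθ,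
    ← (rep_P S).dph.eq t θ _ ht hθ, ← (rep_V S).dph.eq t θ _ ht hθ,
    ← (rep_P S).dt.eq t θ _ ht hθ, ← (rep_V S).dt.eq t θ _ ht hθ,
    ← (rep_P S).dph.eq t θ _ ht hθ, ← (rep_V S).dph.eq t θ _ ht hθ]
  simp only [unc, lw]
  rw [← zero_add (2 * π), cdt_per S.periodicΦ, cdt_per S.periodicv, cdφ_per S.periodicΦ,
    cdφ_per S.periodicv, S.periodicΦ, Rω.periodic]

/-- the density of the renormalized energy -/
def HH (S : RHMSolution (Ioi 0) A₁ Rω Λ a) : ℝ × ℝ × ℝ → ℝ := fun p =>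
  (cgradNormSq S.Φ p.1 p.2.1 p.2.2
    + ((Rω.ω p.1 p.2.1 p.2.2) ^ 4)⁻¹ * cgradNormSq S.v p.1 p.2.1 p.2.2) * Real.sin p.2.1

/-- `ln ω − ln sin θ` -/
def ww (Rω : Renormalizer (Ioi 0) A₁) : ℝ → ℝ → ℝ → ℝ :=
  fun t θ φ => Real.log (Rω.ω t θ φ) - Real.log (Real.sin θ)

lemma cdφ_ww (Rω : Renormalizer (Ioi 0) A₁) : cdφ (ww Rω) = cdφ (lw Rω) := by
  funext t θ φ
  simp only [cdφ, pdφ, ww, lw, deriv_sub_const]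

lemma rep_ww1 (Rω : Renormalizer (Ioi 0) A₁) :
    CylRep (cdθ (ww Rω)) (fun p => DD eth (unc (lw Rω)) p - cos p.2.1 / sin p.2.1) 2 := by
  refine ⟨(rep_w Rω).dth.cd.sub (cosp_cd.div sinp_cd (fun _ hp => sin_ne_Omo hp)),
    fun t θ φ ht hθ => ?_⟩
  have hs := Real.sin_pos_of_mem_Ioo hθ
  have h1 := o_th (rep_w Rω).c1 (mem_Omo.2 ⟨ht, hθ⟩ : (t, θ, φ) ∈ Omo)
  exact (h1.sub ((Real.hasDerivAt_sin θ).log hs.ne')).deriv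

lemma ww2 (Rω : Renormalizer (Ioi 0) A₁) {t θ φ : ℝ} (ht : 0 < t) (hθ : θ ∈ Ioo 0 π) :
    cdθ (cdθ (ww Rω)) t θ φ = DD eth (DD eth (unc (lw Rω))) (t, θ, φ) + (sin θ ^ 2)⁻¹ := by
  have hs := Real.sin_pos_of_mem_Ioo hθ
  have hp : (t, θ, φ) ∈ Omo := mem_Omo.2 ⟨ht, hθ⟩
  rw [(rep_ww1 Rω).dth.eq t θ φ ht hθ]
  have h1 := o_th (rep_w Rω).dth.c1 hp
  have h2 := h1.sub ((Real.hasDerivAt_cos θ).div (Real.hasDerivAt_sin θ) hs.ne')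
  rw [(o_th (rep_ww1 Rω).c1 hp).unique h2]
  have := Real.sin_sq_add_cos_sq θ
  field_simp
  linarith

lemma the_hyp (S : RHMSolution (Ioi 0) A₁ Rω Λ a)
    (hωt : ∀ t t' θ φ : ℝ, Rω.ω t θ φ = Rω.ω t' θ φ) :
    ∃ G, Hyp (unc S.Φ) (unc S.v) (unc (lw Rω)) (HH S) G Λ A₁ a := by
  obtain ⟨G, hG, eG, _⟩ := Rω.deriv_ext 0 0 2 (by norm_num)
  obtain ⟨G0, _, eG0, bG0⟩ := Rω.deriv_ext 0 0 0 (by norm_num)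
  obtain ⟨G1, _, eG1, bG1⟩ := Rω.deriv_ext 0 1 0 (by norm_num)
  obtain ⟨G2, _, eG2, bG2⟩ := Rω.deriv_ext 0 2 0 (by norm_num)
  obtain ⟨G3, _, eG3, bG3⟩ := Rω.deriv_ext 0 1 2 (by norm_num)
  have hA := Rω.A₁_ge
  refine ⟨unc G, ⟨by exact_mod_cast S.regΦ, by exact_mod_cast S.regv, (rep_w Rω).cd, ?_,
    by linarith, ?_, ?_, hG, ?_, ?_, the_eqP S hωt, ?_, ?_, ?_, ?_⟩⟩
  · rintro ⟨t, θ, φ⟩ hp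
    exact S.bddΦ t (mem_Om.1 hp).1 θ (mem_Om.1 hp).2 φ
  · rintro ⟨t, θ, φ⟩ hp
    obtain ⟨ht, hθ⟩ := mem_Omo.1 hp
    have h := bG0 t ht θ (Ioo_subset_Icc_self hθ) φ
    rw [eG0 t ht θ hθ φ] at h
    exact h
  · rintro ⟨t, θ, φ⟩ hp
    obtain ⟨ht, hθ⟩ := mem_Omo.1 hp
    have h1 := bG1 t ht θ (Ioo_subset_Icc_self hθ) φ
    have e1 : G1 t θ φ = cdθ (ww Rω) t θ φ := eG1 t ht θ hθ φ
    have h2 := bG2 t ht θ (Ioo_subset_Icc_self hθ) φ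
    have e2 : G2 t θ φ = cdθ (cdθ (ww Rω)) t θ φ := eG2 t ht θ hθ φ
    rw [(rep_ww1 Rω).eq t θ φ ht hθ] at e1
    rw [ww2 Rω ht hθ] at e2
    have hs := Real.sin_pos_of_mem_Ioo hθ
    have hs1 := Real.sin_le_one θ
    have hc1 := Real.abs_cos_le_one θ
    have key : (lapD (unc (lw Rω)) (t, θ, φ) - (sin θ ^ 2)⁻¹ *
        DD eph (DD eph (unc (lw Rω))) (t, θ, φ)) * sin θ
        = sin θ * G2 t θ φ + cos θ * G1 t θ φ - sin θ := by
      rw [e1, e2]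
      simp only [lapD]
      have := Real.sin_sq_add_cos_sq θ
      field_simp
      linear_combination this
    change |(lapD (unc (lw Rω)) (t, θ, φ) - (sin θ ^ 2)⁻¹ *
        DD eph (DD eph (unc (lw Rω))) (t, θ, φ)) * sin θ| ≤ 3 * A₁
    rw [key]
    have t1 := abs_sub (sin θ * G2 t θ φ + cos θ * G1 t θ φ) (sin θ)
    have t2 := abs_add_le (sin θ * G2 t θ φ) (cos θ * G1 t θ φ)
    rw [abs_mul, abs_mul] at t2
    rw [abs_of_pos hs] at t1 t2
    have t3 : sin θ * |G2 t θ φ| ≤ 1 * A₁ := mul_le_mul hs1 h2 (abs_nonneg _) zero_le_one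
    have t4 : |cos θ| * |G1 t θ φ| ≤ 1 * A₁ := mul_le_mul hc1 h1 (abs_nonneg _) zero_le_one
    linarith
  · rintro ⟨t, θ, φ⟩ hp
    obtain ⟨ht, hθ⟩ := mem_Omo.1 hp
    have e : G t θ φ = cdφ (cdφ (ww Rω)) t θ φ := eG t ht θ hθ φ
    rw [cdφ_ww, (rep_w Rω).dph.dph.eq t θ φ ht hθ] at e
    exact e
  · rintro ⟨t, θ, φ⟩ hp
    obtain ⟨ht, hθ⟩ := mem_Omo.1 hp
    have h := bG3 t ht θ (Ioo_subset_Icc_self hθ) φ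
    have e : G3 t θ φ = cdθ (cdφ (cdφ (ww Rω))) t θ φ := eG3 t ht θ hθ φ
    rw [cdφ_ww, (rep_w Rω).dph.dph.dth.eq t θ φ ht hθ] at e
    rwa [e] at h
  · intro t₀ ht₀
    exact S.energy_loc (Icc t₀ (t₀ + 1)) (fun x hx => lt_of_lt_of_le ht₀ hx.1) isCompact_Icc
  · rintro ⟨t, θ, φ⟩ hp
    obtain ⟨ht, hθ⟩ := mem_Omo.1 hp
    have hs := Real.sin_pos_of_mem_Ioo hθ
    have hw := Rω.pos t ht θ hθ φ
    have e : Real.exp (-4 * unc (lw Rω) (t, θ, φ)) = ((Rω.ω t θ φ) ^ 4)⁻¹ := by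
      rw [← Real.exp_log (inv_pos.2 (pow_pos hw 4)), Real.log_inv, Real.log_pow]
      simp only [unc, lw]
      push_cast; ring_nf
    rw [e]
    simp only [HH]
    rw [cgr_eq (rep_P S) ht hθ, cgr_eq (rep_V S) ht hθ]
    refine mul_le_mul_of_nonneg_right ?_ hs.le
    linarith [mul_self_nonneg (DD et (unc S.Φ) (t, θ, φ))]
  · intro t φ ht
    exact S.traceN t ht φ
  · intro t φ ht
    exact S.traceS t ht φ

lemma sphInt_congr {f g : ℝ → ℝ → ℝ} (h : ∀ θ ∈ Ioo (0 : ℝ) π, ∀ φ, f θ φ = g θ φ) :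
    sphInt f = sphInt g := by
  simp only [sphInt]
  refine setIntegral_congr_fun measurableSet_Ioo fun θ hθ => ?_
  have : f θ = g θ := funext (h θ hθ)
  simp only [this]

end final

/-- Proposition `prop:MF`: monotonicity-type identity for the
renormalized energy on the cylinder, for a `t`-independent renormalizer. -/
theorem statement_13
    (A₁ Λ a : ℝ) (Rω : Renormalizer (Ioi 0) A₁)
    (S : RHMSolution (Ioi 0) A₁ Rω Λ a)
    (hωt : ∀ t t' θ φ : ℝ, Rω.ω t θ φ = Rω.ω t' θ φ) :
    ∀ t ∈ Ioi (0 : ℝ),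
      HasDerivAt (fun s : ℝ =>
          (1 / 2) * sphInt (fun θ φ =>
              (cdt S.Φ s θ φ) ^ 2
                + Real.exp (4 * (S.Φ s θ φ - Real.log (Rω.ω s θ φ))) *
                  (cdt S.v s θ φ) ^ 2)
            - (1 / 2) * sphInt (fun θ φ =>
              gradNormSqS2 (S.Φ s) θ φ
                + Real.exp (4 * (S.Φ s θ φ - Real.log (Rω.ω s θ φ))) *
                  gradNormSqS2 (S.v s) θ φ
                + 2 * lapS2 (fun θ φ => Real.log (Rω.ω s θ φ)) θ φ * S.Φ s θ φ))
        (sphInt (fun θ φ =>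
          (cdt S.Φ t θ φ) ^ 2
            + Real.exp (4 * (S.Φ t θ φ - Real.log (Rω.ω t θ φ))) *
              (cdt S.v t θ φ) ^ 2))
        t := by
  intro t ht
  obtain ⟨G, hyp⟩ := the_hyp S hωt
  have hk : ∀ s, 0 < s → sphInt (fun θ φ =>
              (cdt S.Φ s θ φ) ^ 2
                + Real.exp (4 * (S.Φ s θ φ - Real.log (Rω.ω s θ φ))) *
                  (cdt S.v s θ φ) ^ 2)
      = sphInt (fun θ φ => kk (unc S.Φ) (unc S.v) (unc (lw Rω)) (s, θ, φ)) := by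
    intro s hs
    refine sphInt_congr fun θ hθ φ => ?_
    rw [(rep_P S).dt.eq s θ φ hs hθ, (rep_V S).dt.eq s θ φ hs hθ]
    rfl
  have hg : ∀ s, 0 < s → sphInt (fun θ φ =>
              gradNormSqS2 (S.Φ s) θ φ
                + Real.exp (4 * (S.Φ s θ φ - Real.log (Rω.ω s θ φ))) *
                  gradNormSqS2 (S.v s) θ φ
                + 2 * lapS2 (fun θ φ => Real.log (Rω.ω s θ φ)) θ φ * S.Φ s θ φ)
      = sphInt (fun θ φ => gE (unc S.Φ) (unc S.v) (unc (lw Rω)) (s, θ, φ)) := by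
    intro s hs
    refine sphInt_congr fun θ hθ φ => ?_
    have e : lapS2 (fun θ φ => Real.log (Rω.ω s θ φ)) θ φ = lapD (unc (lw Rω)) (s, θ, φ) :=
      (rep_w Rω).lap hs hθ
    rw [(rep_P S).grad hs hθ, (rep_V S).grad hs hθ, e]
    rfl
  rw [hk t ht]
  have hWt : ∀ t t' θ φ : ℝ, unc (lw Rω) (t, θ, φ) = unc (lw Rω) (t', θ, φ) := by
    intro t t' θ φ
    simp only [unc, lw]
    rw [hωt t t']
  have main := abstract_main (rep_P S).cd (rep_V S).cd (rep_w Rω).cd hWt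
    (fun t t' θ φ ht ht' hθ => by
      rw [← (rep_w Rω).lap ht hθ, ← (rep_w Rω).lap ht' hθ]
      have : lw Rω t = lw Rω t' := by
        funext θ φ; simp only [lw]; rw [hωt t t']
      rw [this])
    (the_eqP S hωt) (the_eqV S hωt) (the_per S) hyp.final_bounds ht
  refine main.congr_of_eventuallyEq ?_
  filter_upwards [Ioi_mem_nhds ht] with s hs
  rw [hk s hs, hg s hs]
  rfl
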